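/- arXiv:2401.10847 — 2 statements merged into one kernel-verified Lean document; each statement's English description precedes it below -/
import Mathlib

section
/- Let F be a finite graph with at least one edge. Then either (i) there exist an integer r ≥ 1 and, for each residue class C modulo r, an integer k_C, such that sat(n,F) = ((r−1)·n + k_C)/r for every residue class C modulo r and all sufficiently large n ∈ C, or (ii) there is a function g : ℤ_{≥0} → ℝ with g(n)/n → 0 such that sat(n,F) ≥ n − g(n) for all n. Moreover, case (i) occurs if and only if there exists a tree T such that every graph T+e and every graph 2T+e contains a connected component of F that is not contained in T, and in that case r equals the minimum number of vertices of such a tree T. -/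
open SimpleGraph Filter Topology

/-- `H` (on `β`) is contained in `G` (on `α`): `G` has a subgraph isomorphic to `H`. -/
def Contains {α β : Type*} (G : SimpleGraph α) (H : SimpleGraph β) : Prop :=
  ∃ f : β ↪ α, ∀ a b : β, H.Adj a b → G.Adj (f a) (f b)

/-- `G` is `F`-saturated: `G` does not contain `F`, but adding any missing edge creates `F`. -/
def SatSingle {γ α : Type*} (F : SimpleGraph γ) (G : SimpleGraph α) : Prop :=
  (¬ Contains G F) ∧
    ∀ u v : α, u ≠ v → ¬ G.Adj u v → Contains (G ⊔ SimpleGraph.fromEdgeSet {s(u, v)}) F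

/-- The disjoint union of two graphs. -/
def disjUnionG {α β : Type*} (G : SimpleGraph α) (H : SimpleGraph β) : SimpleGraph (α ⊕ β) :=
  SimpleGraph.fromRel (fun x y =>
    match x, y with
    | Sum.inl a, Sum.inl b => G.Adj a b
    | Sum.inr a, Sum.inr b => H.Adj a b
    | _, _ => False)

/-- `H ∪ kT`: the disjoint union of `H` with `k` copies of `T`. -/
def unionCopies {α β : Type*} (H : SimpleGraph α) (k : ℕ) (T : SimpleGraph β) :
    SimpleGraph (α ⊕ Fin k × β) :=
  SimpleGraph.fromRel (fun x y =>
    match x, y with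
    | Sum.inl a, Sum.inl b => H.Adj a b
    | Sum.inr (i, a), Sum.inr (j, b) => i = j ∧ T.Adj a b
    | _, _ => False)

/-- `T` is a tree such that every graph `T+e` (obtained by adding an edge between two
non-adjacent vertices of `T`) and every graph `2T+e` (obtained from the disjoint union of two
copies of `T` by adding an edge with one endpoint in each copy) contains a connected component of
`F` that is not contained in `T`. -/
def GoodTree {nF : ℕ} (F : SimpleGraph (Fin nF)) (t : ℕ) (T : SimpleGraph (Fin t)) : Prop :=
  T.IsTree ∧
  (∀ u v : Fin t, u ≠ v → ¬ T.Adj u v →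
    ∃ c : F.ConnectedComponent, ¬ Contains T (SimpleGraph.induce c.supp F) ∧
      Contains (T ⊔ SimpleGraph.fromEdgeSet {s(u, v)}) (SimpleGraph.induce c.supp F)) ∧
  (∀ u v : Fin t,
    ∃ c : F.ConnectedComponent, ¬ Contains T (SimpleGraph.induce c.supp F) ∧
      Contains (disjUnionG T T ⊔ SimpleGraph.fromEdgeSet {s(Sum.inl u, Sum.inr v)})
        (SimpleGraph.induce c.supp F))

/-- `satF n F` is the minimum number of edges in an `F`-saturated graph on `n` vertices. -/
noncomputable def satF {nF : ℕ} (n : ℕ) (F : SimpleGraph (Fin nF)) : ℕ :=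
  sInf {m | ∃ G : SimpleGraph (Fin n), SatSingle F G ∧ Nat.card G.edgeSet = m}

/-- Case (i) holds with the particular value `r`. -/
def CaseIWith {nF : ℕ} (F : SimpleGraph (Fin nF)) (r : ℕ) : Prop :=
  1 ≤ r ∧ ∃ k : ℕ → ℤ, ∀ c : ℕ, c < r →
    ∀ᶠ n : ℕ in atTop, n % r = c → (satF n F : ℤ) * r = ((r : ℤ) - 1) * n + k c

/-- Case (ii): `sat(n,F) ≥ n + o(n)`. -/
def CaseII {nF : ℕ} (F : SimpleGraph (Fin nF)) : Prop :=
  ∃ g : ℕ → ℝ, Tendsto (fun n : ℕ => g n / n) atTop (𝓝 0) ∧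
    ∀ n : ℕ, (n : ℝ) - g n ≤ (satF n F : ℝ)

/-! Lower bound: suppose that no tree of order at most `S` is good. If a saturated graph is of the
form `H ∪ kT` with `k` large, then adding an edge inside a copy of `T`, or between two copies,
completes a component of `F` that `T` does not contain, so `T` is good. Hence tree components of
order at most `S` occur boundedly often in saturated graphs, and all other components have average
degree at least `2 - 2 / (S + 1)`, so that `sat(n, F)` is at least `n * S / (S + 1)` up to a
constant.

Periodicity: let `T` be a good tree of minimal order `r`. Along `n ≡ c (mod r)` the excess
`r * sat(n, F) - (r - 1) * n` is bounded below, since the lower bound applies with `S = r - 1`.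
If it is also bounded above, a minimum saturated graph on many vertices has many components
isomorphic to a single good tree of order `r`, and adding one more copy keeps it saturated; so the
excess is eventually nonincreasing, hence eventually constant.

Upper bound: it remains to find saturated graphs `H ∪ kT` with `|H|` fixed in each residue class.
Begin with a clique carrying pendant vertices, the clique being one vertex too small for the
non-leaf vertices of the components of `F` that `T` does not contain, and add edges inside `H`
greedily. An edge inside `kT`, or between `H` and a copy of `T`, saves the missing clique vertex,
because it supplies part of a component which `T + e` or `2T + e` contains.
-/

section Containment

variable {α β γ V W X : Type*}

theorem contains_iff_isContained {G : SimpleGraph α} {H : SimpleGraph β} :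
    Contains G H ↔ H ⊑ G :=
  isContained_iff_exists_le_comap.symm

namespace Contains

theorem of_injective {G : SimpleGraph α} {H : SimpleGraph β} {f : β → α}
    (hf : Function.Injective f) (h : ∀ a b, H.Adj a b → G.Adj (f a) (f b)) : Contains G H :=
  ⟨⟨f, hf⟩, h⟩

theorem trans {G : SimpleGraph α} {H : SimpleGraph β} {K : SimpleGraph γ}
    (hGH : Contains G H) (hHK : Contains H K) : Contains G K :=
  contains_iff_isContained.2
    ((contains_iff_isContained.1 hHK).trans (contains_iff_isContained.1 hGH))

theorem mono {G G' : SimpleGraph α} {H : SimpleGraph β} (hle : G ≤ G') (h : Contains G H) :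
    Contains G' H :=
  contains_iff_isContained.2 ((contains_iff_isContained.1 h).mono_right hle)

theorem of_iso {G : SimpleGraph α} {H : SimpleGraph β} (e : G ≃g H) : Contains H G :=
  contains_iff_isContained.2 e.isContained

end Contains

theorem sup_edge_adj {G : SimpleGraph α} {u v x y : α} :
    (G ⊔ edge u v).Adj x y ↔ G.Adj x y ∨ ((x = u ∧ y = v ∨ x = v ∧ y = u) ∧ x ≠ y) := by
  rw [sup_adj, edge_adj]

theorem map_sup_edge_adj {G : SimpleGraph α} {H : SimpleGraph β} {f : α → β}
    (hf : Function.Injective f) (hadj : ∀ a b, G.Adj a b → H.Adj (f a) (f b)) {u v a b : α}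
    (hab : (G ⊔ edge u v).Adj a b) : (H ⊔ edge (f u) (f v)).Adj (f a) (f b) := by
  rw [sup_edge_adj] at hab ⊢
  rcases hab with hab | ⟨⟨rfl, rfl⟩ | ⟨rfl, rfl⟩, hne⟩
  · exact Or.inl (hadj _ _ hab)
  · exact Or.inr ⟨Or.inl ⟨rfl, rfl⟩, hf.ne hne⟩
  · exact Or.inr ⟨Or.inr ⟨rfl, rfl⟩, hf.ne hne⟩

theorem mem_of_reachable {F : SimpleGraph V} {S : Set V}
    (hS : ∀ a ∈ S, ∀ b, F.Adj a b → b ∈ S) {a b : V} (hab : F.Reachable a b) (ha : a ∈ S) :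
    b ∈ S := by
  obtain ⟨p⟩ := hab
  induction p with
  | nil => exact ha
  | cons hadj _ ih => exact ih (hS _ ha _ hadj)

theorem supp_subset_of_mem {F : SimpleGraph V} {S : Set V}
    (hS : ∀ a ∈ S, ∀ b, F.Adj a b → b ∈ S) {a : V} (ha : a ∈ S) :
    (F.connectedComponentMk a).supp ⊆ S :=
  fun _ hb => mem_of_reachable hS (ConnectedComponent.eq.1 hb).symm ha

end Containment

section UnionCopies

variable {α β γ : Type*}

theorem disjUnionG_eq_sum (G : SimpleGraph α) (H : SimpleGraph β) : disjUnionG G H = G ⊕g H := by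
  ext x y
  rcases x with a | a <;> rcases y with b | b
  · simpa [disjUnionG] using ⟨fun h => h.2.elim id Adj.symm, fun h => ⟨h.ne, Or.inl h⟩⟩
  · simp [disjUnionG]
  · simp [disjUnionG]
  · simpa [disjUnionG] using ⟨fun h => h.2.elim id Adj.symm, fun h => ⟨h.ne, Or.inl h⟩⟩

theorem unionCopies_eq_sum (H : SimpleGraph α) (k : ℕ) (T : SimpleGraph β) :
    unionCopies H k T = H ⊕g ((⊥ : SimpleGraph (Fin k)) □ T) := by
  ext x y
  rcases x with a | ⟨i, a⟩ <;> rcases y with b | ⟨j, b⟩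
  · simpa [unionCopies] using ⟨fun h => h.2.elim id Adj.symm, fun h => ⟨h.ne, Or.inl h⟩⟩
  · simp [unionCopies]
  · simp [unionCopies]
  · have hiff : (i = j → a ≠ b) ∧ (i = j ∧ T.Adj a b ∨ j = i ∧ T.Adj b a) ↔
        T.Adj a b ∧ i = j :=
      ⟨fun h => h.2.elim And.symm fun h => ⟨h.2.symm, h.1.symm⟩,
        fun h => ⟨fun _ => h.1.ne, Or.inl h.symm⟩⟩
    simpa [unionCopies, boxProd_adj] using hiff

variable {H : SimpleGraph α} {k : ℕ} {T : SimpleGraph β}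

@[simp] theorem unionCopies_adj_inl {a b : α} :
    (unionCopies H k T).Adj (Sum.inl a) (Sum.inl b) ↔ H.Adj a b := by
  rw [unionCopies_eq_sum, sum_adj_inl]

@[simp] theorem unionCopies_adj_inr {p q : Fin k × β} :
    (unionCopies H k T).Adj (Sum.inr p) (Sum.inr q) ↔ p.1 = q.1 ∧ T.Adj p.2 q.2 := by
  simp [unionCopies_eq_sum, boxProd_adj, and_comm]

@[simp] theorem not_unionCopies_adj_inl_inr {a : α} {q : Fin k × β} :
    ¬ (unionCopies H k T).Adj (Sum.inl a) (Sum.inr q) := by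
  simp [unionCopies_eq_sum]

@[simp] theorem not_unionCopies_adj_inr_inl {a : α} {q : Fin k × β} :
    ¬ (unionCopies H k T).Adj (Sum.inr q) (Sum.inl a) := by
  simp [unionCopies_eq_sum]

theorem unionCopies_mono {H H' : SimpleGraph α} (k : ℕ) (T : SimpleGraph β) (h : H ≤ H') :
    unionCopies H k T ≤ unionCopies H' k T := by
  intro x y hxy
  rcases x with x | x <;> rcases y with y | y <;> simp_all [h _]

theorem unionCopies_sup_edge_le (H : SimpleGraph α) (k : ℕ) (T : SimpleGraph β) (u v : α) :
    unionCopies (H ⊔ edge u v) k T ≤ unionCopies H k T ⊔ edge (Sum.inl u) (Sum.inl v) := by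
  intro x y hxy
  rcases x with x | x <;> rcases y with y | y
  · simpa [edge_adj] using hxy
  · simp at hxy
  · simp at hxy
  · exact sup_adj .. |>.2 (Or.inl (unionCopies_adj_inr.2 (unionCopies_adj_inr.1 hxy)))

theorem card_edgeSet_bot_boxProd [Finite β] (k : ℕ) (T : SimpleGraph β) :
    Nat.card ((⊥ : SimpleGraph (Fin k)) □ T).edgeSet = k * Nat.card T.edgeSet := by
  classical
  have := Fintype.ofFinite β
  have hsum := sum_degrees_eq_twice_card_edges ((⊥ : SimpleGraph (Fin k)) □ T)
  simp only [degree_boxProd, bot_degree, zero_add, Fintype.sum_prod_type,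
    sum_degrees_eq_twice_card_edges, Finset.sum_const, Finset.card_univ, Fintype.card_fin,
    smul_eq_mul] at hsum
  rw [Nat.card_eq_fintype_card, Nat.card_eq_fintype_card, ← edgeFinset_card, ← edgeFinset_card]
  linarith

theorem card_edgeSet_unionCopies [Finite α] [Finite β] (H : SimpleGraph α) (k : ℕ)
    (T : SimpleGraph β) :
    Nat.card (unionCopies H k T).edgeSet = Nat.card H.edgeSet + k * Nat.card T.edgeSet := by
  rw [unionCopies_eq_sum, Nat.card_congr edgeSetSumEquiv, Nat.card_sum, card_edgeSet_bot_boxProd]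

end UnionCopies

section Saturation

variable {α β V : Type*}

theorem SatSingle.of_iso {F : SimpleGraph V} {G : SimpleGraph α} {H : SimpleGraph β} (e : G ≃g H)
    (h : SatSingle F G) : SatSingle F H := by
  refine ⟨fun hc => h.1 ((Contains.of_iso e.symm).trans hc), fun u v huv hadj => ?_⟩
  refine Contains.trans (.of_injective e.injective fun a b hab => ?_)
    (h.2 (e.symm u) (e.symm v) (e.symm.injective.ne huv) (mt e.symm.map_adj_iff.1 hadj))
  simpa only [RelIso.apply_symm_apply, edge] using
    map_sup_edge_adj e.injective (fun _ _ => e.map_adj_iff.2) hab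

theorem satF_le {nF n : ℕ} {F : SimpleGraph (Fin nF)} [Finite α] {G : SimpleGraph α}
    (hn : Nat.card α = n) (h : SatSingle F G) : satF n F ≤ Nat.card G.edgeSet := by
  let e : G ≃g G.map (Finite.equivFinOfCardEq hn).toEmbedding := Iso.map _ G
  exact Nat.sInf_le ⟨_, h.of_iso e, (Nat.card_congr e.mapEdgeSet).symm⟩

theorem exists_le_maximal_sup_edge [Finite α] {p : SimpleGraph α → Prop} {G₀ : SimpleGraph α}
    (h₀ : p G₀) :
    ∃ G, G₀ ≤ G ∧ p G ∧ ∀ u v, u ≠ v → ¬ G.Adj u v → ¬ p (G ⊔ edge u v) := by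
  obtain ⟨G, hle, hG⟩ := (Set.toFinite {G | p G}).exists_le_maximal h₀
  exact ⟨G, hle, hG.prop, fun u v huv hadj hp =>
    (lt_sup_edge _ _ _ huv hadj).not_ge (hG.le_of_ge hp le_sup_left)⟩

theorem exists_satSingle_card_eq_satF {nF : ℕ} {F : SimpleGraph (Fin nF)} (hF : F ≠ ⊥) (n : ℕ) :
    ∃ G : SimpleGraph (Fin n), SatSingle F G ∧ Nat.card G.edgeSet = satF n F := by
  have hbot : ¬ Contains (⊥ : SimpleGraph (Fin n)) F :=
    contains_iff_isContained.not.2 (free_bot hF)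
  obtain ⟨G, -, hG, hmax⟩ :=
    exists_le_maximal_sup_edge (p := fun G : SimpleGraph (Fin n) => ¬ Contains G F) hbot
  exact Nat.sInf_mem (s := {m | ∃ G : SimpleGraph (Fin n), SatSingle F G ∧
    Nat.card G.edgeSet = m}) ⟨_, G, ⟨hG, fun u v huv hadj => not_not.1 (hmax u v huv hadj)⟩, rfl⟩

end Saturation

/-- `f` restricts to a copy of the subgraph of `F` induced on `S` inside `G`. Keeping `f` total
lets copies be enlarged without changing their type. -/
structure IsPartialCopy {V X : Type*} (F : SimpleGraph V) (G : SimpleGraph X) (S : Set V)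
    (f : V → X) : Prop where
  injOn : Set.InjOn f S
  adj : ∀ a ∈ S, ∀ b ∈ S, F.Adj a b → G.Adj (f a) (f b)

section PartialCopies

variable {V X Y : Type*} {F : SimpleGraph V} {G G' : SimpleGraph X} {K : SimpleGraph Y}
  {S R : Set V} {f g : V → X}

theorem Contains.exists_isPartialCopy_univ (h : Contains G F) :
    ∃ f, IsPartialCopy F G Set.univ f := by
  obtain ⟨f, hf⟩ := h
  exact ⟨f, f.injective.injOn, fun a _ b _ => hf a b⟩

theorem Contains.exists_isPartialCopy [Nonempty X] (h : Contains G (F.induce S)) :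
    ∃ f, IsPartialCopy F G S f := by
  classical
  obtain ⟨f, hf⟩ := h
  refine ⟨fun a => if ha : a ∈ S then f ⟨a, ha⟩ else Classical.arbitrary X,
    fun a ha b hb hab => ?_, fun a ha b hb hab => ?_⟩
  · simpa [ha, hb] using hab
  · simpa [ha, hb] using hf ⟨a, ha⟩ ⟨b, hb⟩ hab

namespace IsPartialCopy

theorem contains_induce (h : IsPartialCopy F G S f) : Contains G (F.induce S) :=
  .of_injective (f := fun a => f a) (Set.injOn_iff_injective.1 h.injOn) fun a b hab =>
    h.adj a a.2 b b.2 hab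

theorem contains (h : IsPartialCopy F G Set.univ f) : Contains G F :=
  .of_injective (Set.injOn_univ.1 h.injOn) fun a b hab => h.adj a trivial b trivial hab

theorem mono (h : IsPartialCopy F G S f) (hR : R ⊆ S) : IsPartialCopy F G R f :=
  ⟨h.injOn.mono hR, fun a ha b hb => h.adj a (hR ha) b (hR hb)⟩

theorem congr (h : IsPartialCopy F G S f) (hfg : Set.EqOn f g S) : IsPartialCopy F G S g :=
  ⟨hfg.injOn_iff.1 h.injOn, fun a ha b hb hab => hfg ha ▸ hfg hb ▸ h.adj a ha b hb hab⟩

theorem comp {φ : X → Y} (h : IsPartialCopy F G S f) (hφ : Function.Injective φ)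
    (hadj : ∀ x y, G.Adj x y → K.Adj (φ x) (φ y)) : IsPartialCopy F K S (φ ∘ f) :=
  ⟨hφ.comp_injOn h.injOn, fun a ha b hb hab => hadj _ _ (h.adj a ha b hb hab)⟩

theorem mono_right (h : IsPartialCopy F G S f) (hG : G ≤ G') : IsPartialCopy F G' S f :=
  h.comp Function.injective_id fun _ _ => @hG _ _

theorem of_comp {φ : Y → X} {p : V → Y} (h : IsPartialCopy F G S f)
    (hadj : ∀ x y, G.Adj (φ x) (φ y) → K.Adj x y) (hp : ∀ a ∈ S, φ (p a) = f a) :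
    IsPartialCopy F K S p :=
  ⟨fun a ha b hb hab => h.injOn ha hb (by rw [← hp a ha, ← hp b hb, hab]),
    fun a ha b hb hab => hadj _ _ (by simpa only [hp a ha, hp b hb] using h.adj a ha b hb hab)⟩

theorem exists_union (hf : IsPartialCopy F G S f) (hg : IsPartialCopy F G R g)
    (hne : ∀ a ∈ S, ∀ b ∈ R, f a ≠ g b)
    (hadj : ∀ a ∈ S, ∀ b ∈ R, F.Adj a b → G.Adj (f a) (g b)) (hSR : Disjoint S R) :
    ∃ h, IsPartialCopy F G (S ∪ R) h ∧ Set.EqOn h f S ∧ Set.EqOn h g R := by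
  classical
  have hS : Set.EqOn (S.piecewise f g) f S := S.piecewise_eqOn f g
  have hR : Set.EqOn (S.piecewise f g) g R :=
    (S.piecewise_eqOn_compl f g).mono hSR.subset_compl_left
  refine ⟨S.piecewise f g, ⟨?_, ?_⟩, hS, hR⟩
  · exact (Set.injOn_union hSR).2 ⟨(hf.congr hS.symm).injOn, (hg.congr hR.symm).injOn,
      fun a ha b hb => by rw [hS ha, hR hb]; exact hne a ha b hb⟩
  · rintro a (ha | ha) b (hb | hb) hab
    · exact (hf.congr hS.symm).adj a ha b hb hab
    · exact hS ha ▸ hR hb ▸ hadj a ha b hb hab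
    · exact hR ha ▸ hS hb ▸ (hadj b hb a ha hab.symm).symm
    · exact (hg.congr hR.symm).adj a ha b hb hab

theorem exists_insert {b : V} {x : X} (hf : IsPartialCopy F G S f) (hb : b ∉ S)
    (hx : ∀ a ∈ S, f a ≠ x) (hadj : ∀ a ∈ S, F.Adj a b → G.Adj (f a) x) :
    ∃ h, IsPartialCopy F G (insert b S) h ∧ Set.EqOn h f S ∧ h b = x := by
  have hsingle : IsPartialCopy F G {b} fun _ => x :=
    ⟨Set.injOn_singleton _ _, by rintro _ rfl _ rfl h; exact absurd h F.irrefl⟩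
  obtain ⟨h, hh, hS, hbx⟩ := hf.exists_union hsingle (by simpa using hx) (by simpa using hadj)
    (Set.disjoint_singleton_right.2 hb)
  exact ⟨h, by rwa [Set.union_singleton] at hh, hS, hbx rfl⟩

theorem contains_supp {a : V} (hf : IsPartialCopy F G S f)
    (hS : ∀ a ∈ S, ∀ b, F.Adj a b → b ∈ S) (ha : a ∈ S) :
    Contains G (F.induce (F.connectedComponentMk a).supp) :=
  (hf.mono (supp_subset_of_mem hS ha)).contains_induce

theorem exists_adj_of_sup_edge {u v : X} (hf : IsPartialCopy F (G ⊔ edge u v) S f)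
    (hG : ¬ IsPartialCopy F G S f) : ∃ a ∈ S, ∃ b ∈ S, F.Adj a b ∧ f a = u ∧ f b = v := by
  by_contra! hno
  refine hG ⟨hf.injOn, fun a ha b hb hab => ?_⟩
  rcases sup_edge_adj.1 (hf.adj a ha b hb hab) with h | ⟨⟨hau, hbv⟩ | ⟨hav, hbu⟩, -⟩
  · exact h
  · exact absurd hbv (hno a ha b hb hab hau)
  · exact absurd hav (hno b hb a ha hab.symm hbu)

theorem contains_supp_of_mem_range {φ : Y → X} {a : V} (hf : IsPartialCopy F G S f)
    (hS : ∀ a ∈ S, ∀ b, F.Adj a b → b ∈ S) (hadj : ∀ x y, G.Adj (φ x) (φ y) → K.Adj x y)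
    (hclosed : ∀ x z, G.Adj (φ x) z → z ∈ Set.range φ) (ha : a ∈ S) (hfa : f a ∈ Set.range φ) :
    Contains K (F.induce (F.connectedComponentMk a).supp) := by
  obtain ⟨x, hx⟩ := hfa
  have : Nonempty Y := ⟨x⟩
  have hK : IsPartialCopy F K (S ∩ f ⁻¹' Set.range φ) (Function.invFun φ ∘ f) :=
    (hf.mono Set.inter_subset_left).of_comp hadj fun b hb => Function.invFun_eq hb.2
  refine hK.contains_supp (fun b hb d hbd => ?_) ⟨ha, x, hx⟩
  obtain ⟨hbS, z, hz⟩ := hb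
  have hdS := hS b hbS d hbd
  exact ⟨hdS, hclosed z _ (hz ▸ hf.adj b hbS d hdS hbd)⟩

theorem contains_supp_of_sup_edge {φ : Y → X} {a : V} {x y : Y}
    (hf : IsPartialCopy F (G ⊔ edge (φ x) (φ y)) Set.univ f) (hφ : Function.Injective φ)
    (hadj : ∀ x y, G.Adj (φ x) (φ y) → K.Adj x y)
    (hclosed : ∀ x z, G.Adj (φ x) z → z ∈ Set.range φ) (ha : f a = φ x) :
    Contains (K ⊔ edge x y) (F.induce (F.connectedComponentMk a).supp) := by
  refine hf.contains_supp_of_mem_range (φ := φ) (fun _ _ _ _ => trivial) (fun p q hpq => ?_)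
    (fun p z hpz => ?_) trivial ⟨x, ha.symm⟩
  · rw [sup_edge_adj] at hpq ⊢
    simpa only [hφ.eq_iff, hφ.ne_iff] using hpq.imp_left (hadj p q)
  · rcases sup_edge_adj.1 hpz with h | ⟨⟨-, rfl⟩ | ⟨-, rfl⟩, -⟩
    · exact hclosed p z h
    · exact ⟨y, rfl⟩
    · exact ⟨x, rfl⟩

end IsPartialCopy

end PartialCopies

/-- The vertices of the components of `F` that are not contained in `T`, the components that decide
whether `F` is contained in a graph with many disjoint copies of `T`. -/
def essential {V W : Type*} (F : SimpleGraph V) (T : SimpleGraph W) : Set V :=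
  {a | ¬ Contains T (F.induce (F.connectedComponentMk a).supp)}

section Essential

variable {α V W : Type*} {F : SimpleGraph V} {T : SimpleGraph W} {H : SimpleGraph α} {k : ℕ}

theorem mem_essential_iff_of_reachable {a b : V} (hab : F.Reachable a b) :
    a ∈ essential F T ↔ b ∈ essential F T := by
  rw [essential, Set.mem_ofPred_eq, Set.mem_ofPred_eq, ConnectedComponent.eq.2 hab]

theorem mem_essential_of_adj {a b : V} (ha : a ∈ essential F T) (hab : F.Adj a b) :
    b ∈ essential F T :=
  (mem_essential_iff_of_reachable hab.reachable).1 ha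

theorem exists_unused_copy [Finite V] {f : V → α ⊕ Fin k × W} {S : Set V} (hk : S.ncard < k) :
    ∃ i, ∀ a ∈ S, ∀ w, f a ≠ Sum.inr (i, w) := by
  by_contra! hused
  choose a ha w hw using hused
  have hinj : Function.Injective a := fun i j hij => by
    have h := (hw i).symm.trans ((congrArg f hij).trans (hw j))
    exact (Prod.mk.inj (Sum.inr.inj h)).1
  have hle : Nat.card (Fin k) ≤ Nat.card S :=
    Nat.card_le_card_of_injective (fun i => ⟨a i, ha i⟩) fun i j hij =>
      hinj (congrArg Subtype.val hij)
  rw [Nat.card_fin, Nat.card_coe_set_eq] at hle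
  omega

namespace IsPartialCopy

theorem inr_copy {G : SimpleGraph (α ⊕ Fin k × W)} {S : Set V} {p : V → W}
    (hp : IsPartialCopy F T S p) (hG : unionCopies H k T ≤ G) (i : Fin k) :
    IsPartialCopy F G S fun a => Sum.inr (i, p a) :=
  (hp.comp (φ := fun w => Sum.inr (i, w)) (fun _ _ h => by simpa using h)
    fun _ _ h => unionCopies_adj_inr.2 ⟨rfl, h⟩).mono_right hG

theorem exists_union_component [Finite V] {G : SimpleGraph (α ⊕ Fin k × W)} {S : Set V}
    {f : V → α ⊕ Fin k × W} {b : V} (hf : IsPartialCopy F G S f) (hk : Nat.card V ≤ k)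
    (hG : unionCopies H k T ≤ G) (hS : ∀ a ∈ S, ∀ b, F.Adj a b → b ∈ S) (hb : b ∉ S)
    (hT : b ∉ essential F T) :
    ∃ g, IsPartialCopy F G (S ∪ (F.connectedComponentMk b).supp) g ∧ Set.EqOn g f S := by
  have hT := not_not.1 hT
  have : Nonempty W := ⟨hT.choose ⟨b, rfl⟩⟩
  obtain ⟨p, hp⟩ := hT.exists_isPartialCopy
  have hlt : S.ncard < k :=
    (Set.ncard_lt_card (ne_of_mem_of_not_mem' (Set.mem_univ b) hb).symm).trans_le hk
  obtain ⟨i, hi⟩ := exists_unused_copy (f := f) hlt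
  have hdisj : Disjoint S (F.connectedComponentMk b).supp :=
    Set.disjoint_left.2 fun a ha hab => hb (mem_of_reachable hS (ConnectedComponent.eq.1 hab) ha)
  obtain ⟨g, hg, hgS, -⟩ := hf.exists_union (hp.inr_copy hG i) (fun a ha d _ => hi a ha (p d))
    (fun a ha d hd had => absurd hd (Set.disjoint_left.1 hdisj (hS a ha d had))) hdisj
  exact ⟨g, hg, hgS⟩

theorem contains_of_essential_subset [Finite V] {G : SimpleGraph (α ⊕ Fin k × W)} {S : Set V}
    {f : V → α ⊕ Fin k × W} (hf : IsPartialCopy F G S f) (hk : Nat.card V ≤ k)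
    (hG : unionCopies H k T ≤ G) (hS : ∀ a ∈ S, ∀ b, F.Adj a b → b ∈ S)
    (hess : essential F T ⊆ S) : Contains G F := by
  induction hn : Sᶜ.ncard using Nat.strong_induction_on generalizing S f with
  | _ n ih =>
    rcases eq_or_ne S Set.univ with rfl | hne
    · exact hf.contains
    obtain ⟨b, hb⟩ := (Set.ne_univ_iff_exists_notMem S).1 hne
    obtain ⟨g, hg, -⟩ := hf.exists_union_component hk hG hS hb fun h => hb (hess h)
    have hlt : (S ∪ (F.connectedComponentMk b).supp)ᶜ ⊂ Sᶜ :=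
      compl_lt_compl_iff_lt.2 (Set.ssubset_iff_exists.2
        ⟨Set.subset_union_left, b, Or.inr rfl, hb⟩)
    refine ih _ (hn ▸ Set.ncard_lt_ncard hlt) hg ?_ (hess.trans Set.subset_union_left) rfl
    · rintro a (ha | ha) d had
      · exact Or.inl (hS a ha d had)
      · exact Or.inr (ConnectedComponent.mem_supp_of_adj_mem_supp _ ha had)

theorem contains_of_essential [Finite V] {G : SimpleGraph (α ⊕ Fin k × W)} {f : V → α ⊕ Fin k × W}
    (hf : IsPartialCopy F G (essential F T) f) (hk : Nat.card V ≤ k)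
    (hG : unionCopies H k T ≤ G) : Contains G F :=
  hf.contains_of_essential_subset hk hG (fun _ ha _ => mem_essential_of_adj ha) subset_rfl

end IsPartialCopy

theorem exists_inl_eq_of_mem_essential {f : V → α ⊕ Fin k × W} {a : V}
    (hf : IsPartialCopy F (unionCopies H k T) Set.univ f) (ha : a ∈ essential F T) :
    ∃ x, Sum.inl x = f a := by
  rcases hfa : f a with x | ⟨i, w⟩
  · exact ⟨x, rfl⟩
  refine absurd (hf.contains_supp_of_mem_range (φ := fun w => Sum.inr (i, w))
    (fun _ _ _ _ => trivial) (fun _ _ h => (unionCopies_adj_inr.1 h).2) ?_ trivial ⟨w, hfa.symm⟩) ha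
  rintro p (z | ⟨j, z⟩) h
  · exact absurd h not_unionCopies_adj_inr_inl
  · exact ⟨z, congrArg (fun l => Sum.inr (l, z)) (unionCopies_adj_inr.1 h).1⟩

theorem contains_induce_essential (h : Contains (unionCopies H k T) F) :
    Contains H (F.induce (essential F T)) := by
  obtain ⟨f, hf⟩ := h.exists_isPartialCopy_univ
  choose g hg using fun a : essential F T => exists_inl_eq_of_mem_essential hf a.2
  refine .of_injective (f := g) (fun a b hab => ?_) fun a b hab => ?_
  · exact Subtype.ext (hf.injOn trivial trivial (by rw [← hg a, ← hg b, hab]))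
  · have hfab := hf.adj a trivial b trivial hab
    rwa [← hg a, ← hg b, unionCopies_adj_inl] at hfab

theorem contains_unionCopies_iff [Finite V] [Nonempty W] (hk : Nat.card V ≤ k) :
    Contains (unionCopies H k T) F ↔ Contains H (F.induce (essential F T)) := by
  refine ⟨contains_induce_essential, fun h => ?_⟩
  rcases isEmpty_or_nonempty V with hV | hV
  · exact contains_iff_isContained.2 .of_isEmpty
  have : NeZero k := ⟨(Nat.card_pos.trans_le hk).ne'⟩
  have hH : Contains (unionCopies H k T) H :=
    .of_injective Sum.inl_injective fun _ _ => unionCopies_adj_inl.2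
  obtain ⟨f, hf⟩ := (hH.trans h).exists_isPartialCopy
  exact hf.contains_of_essential hk le_rfl

end Essential

section ManyCopies

variable {α V W : Type*} {F : SimpleGraph V} {T : SimpleGraph W} {H : SimpleGraph α} {k : ℕ}

/-- The embedding of `H ∪ kT` into `H ∪ (k+1)T` that misses the `i`-th copy of `T`. -/
def skipCopy (H : SimpleGraph α) (T : SimpleGraph W) (i : Fin (k + 1)) :
    unionCopies H k T ↪g unionCopies H (k + 1) T where
  toFun := Sum.map id (Prod.map i.succAbove id)
  inj' := Function.injective_id.sumMap
    (Fin.succAbove_right_injective.prodMap Function.injective_id)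
  map_rel_iff' := by
    rintro (x | ⟨i, x⟩) (y | ⟨j, y⟩) <;> simp

theorem exists_skipCopy_eq {i : Fin (k + 1)} {x : α ⊕ Fin (k + 1) × W}
    (hx : ∀ w, x ≠ Sum.inr (i, w)) : ∃ y, skipCopy H T i y = x := by
  rcases x with x | ⟨j, w⟩
  · exact ⟨Sum.inl x, rfl⟩
  · obtain ⟨j', rfl⟩ := Fin.exists_succAbove_eq fun h : j = i => hx w (by rw [h])
    exact ⟨Sum.inr (j', w), rfl⟩

namespace SatSingle

theorem unionCopies_succ [Finite V] [Nonempty W] (h : SatSingle F (unionCopies H k T))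
    (hk : Nat.card V + 2 ≤ k) : SatSingle F (unionCopies H (k + 1) T) := by
  refine ⟨fun hc => h.1 ?_, fun u v huv hadj => ?_⟩
  · rw [contains_unionCopies_iff (by omega)] at hc ⊢
    exact hc
  obtain ⟨i, hi⟩ := exists_unused_copy (k := k + 1) (f := ![u, v]) (S := Set.univ)
    (by rw [Set.ncard_univ, Nat.card_fin]; omega)
  obtain ⟨u', rfl⟩ := exists_skipCopy_eq (H := H) (T := T) (hi 0 trivial)
  obtain ⟨v', rfl⟩ := exists_skipCopy_eq (H := H) (T := T) (hi 1 trivial)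
  refine Contains.trans (.of_injective (skipCopy H T i).injective fun a b hab => ?_)
    (h.2 u' v' (fun h => huv (by rw [h])) (mt (skipCopy H T i).map_adj_iff.2 hadj))
  exact map_sup_edge_adj (skipCopy H T i).injective
    (fun _ _ => (skipCopy H T i).map_adj_iff.2) hab

theorem exists_mem_essential [Finite V] (h : SatSingle F (unionCopies H k T))
    (hk : Nat.card V ≤ k) {x y : α ⊕ Fin k × W} (hxy : x ≠ y)
    (hadj : ¬ (unionCopies H k T).Adj x y) :
    ∃ f, IsPartialCopy F (unionCopies H k T ⊔ edge x y) Set.univ f ∧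
      ∃ a ∈ essential F T, f a = x := by
  obtain ⟨f, hf⟩ := (h.2 x y hxy hadj).exists_isPartialCopy_univ
  obtain ⟨a, ha, -, -, -, hax, -⟩ :=
    (hf.mono (Set.subset_univ (essential F T))).exists_adj_of_sup_edge fun hess =>
      h.1 (hess.contains_of_essential hk le_rfl)
  exact ⟨f, hf, a, ha, hax⟩

theorem exists_component {Y : Type*} {K : SimpleGraph Y} [Finite V]
    (h : SatSingle F (unionCopies H k T)) (hk : Nat.card V ≤ k) {φ : Y → Fin k × W}
    (hφ : Function.Injective φ)
    (hK : ∀ x y, (unionCopies H k T).Adj (Sum.inr (φ x)) (Sum.inr (φ y)) ↔ K.Adj x y)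
    (hclosed : ∀ x w, ((φ x).1, w) ∈ Set.range φ) {u v : Y} (huv : u ≠ v)
    (hadj : ¬ K.Adj u v) :
    ∃ c : F.ConnectedComponent, ¬ Contains T (F.induce c.supp) ∧
      Contains (K ⊔ edge u v) (F.induce c.supp) := by
  obtain ⟨f, hf, a, ha, hfa⟩ := h.exists_mem_essential hk
    (Sum.inr_injective.comp hφ |>.ne huv) (mt (hK u v).1 hadj)
  refine ⟨F.connectedComponentMk a, ha, hf.contains_supp_of_sup_edge (φ := Sum.inr ∘ φ)
    (Sum.inr_injective.comp hφ) (fun x y => (hK x y).1) ?_ hfa⟩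
  rintro x (z | ⟨i, w⟩) hz
  · exact absurd hz not_unionCopies_adj_inr_inl
  · obtain ⟨y, hy⟩ := hclosed x w
    exact ⟨y, congrArg Sum.inr (hy.trans (congrArg (·, w) (unionCopies_adj_inr.1 hz).1))⟩

theorem goodTree {nF t : ℕ} {F : SimpleGraph (Fin nF)} {T : SimpleGraph (Fin t)}
    (h : SatSingle F (unionCopies H k T)) (hT : T.IsTree) (hk : nF + 2 ≤ k) : GoodTree F t T := by
  have hcard : Nat.card (Fin nF) ≤ k := by rw [Nat.card_fin]; omega
  let i : Fin k := ⟨0, by omega⟩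
  let j : Fin k := ⟨1, by omega⟩
  have hij : i ≠ j := by simp [i, j]
  refine ⟨hT, fun u v huv hadj => ?_, fun u v => ?_⟩
  · exact h.exists_component hcard (φ := fun w => (i, w)) (fun _ _ h => by simpa using h)
      (fun _ _ => by simp) (fun _ w => ⟨w, rfl⟩) huv hadj
  · refine h.exists_component hcard (φ := Sum.elim (fun w => (i, w)) fun w => (j, w)) ?_ ?_ ?_
      Sum.inl_ne_inr (by simp [disjUnionG_eq_sum])
    · exact Function.Injective.sumElim (fun _ _ h => by simpa using h)
        (fun _ _ h => by simpa using h) fun _ _ h => hij (Prod.mk.inj h).1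
    · rintro (x | x) (y | y) <;> simp [disjUnionG_eq_sum, hij, hij.symm]
    · rintro (x | x) w
      · exact ⟨Sum.inl w, rfl⟩
      · exact ⟨Sum.inr w, rfl⟩

end SatSingle

end ManyCopies

/-- `G` has `k` distinct components isomorphic to `T`. -/
def HasComponentCopies {V W : Type*} (G : SimpleGraph V) (k : ℕ) (T : SimpleGraph W) : Prop :=
  ∃ C : Fin k ↪ G.ConnectedComponent, ∀ i, Nonempty (T ≃g (C i).toSimpleGraph)

section Components

variable {V W : Type*} {G : SimpleGraph V} {T : SimpleGraph W} {k : ℕ}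

theorem HasComponentCopies.exists_iso_unionCopies (h : HasComponentCopies G k T) :
    ∃ S : Set V, Nonempty (unionCopies (G.induce S) k T ≃g G) := by
  obtain ⟨C, hC⟩ := h
  let e := fun i => (hC i).some
  have hmem : ∀ i a, G.connectedComponentMk (e i a) = C i := fun i a => (e i a).2
  have hindex : ∀ {i j a b}, G.connectedComponentMk (e i a) = G.connectedComponentMk (e j b) →
      i = j := fun hab => C.injective ((hmem _ _).symm.trans (hab.trans (hmem _ _)))
  let S : Set V := {v | ∀ i, G.connectedComponentMk v ≠ C i}
  have hout : ∀ (x : S) i a, G.connectedComponentMk x ≠ G.connectedComponentMk (e i a) :=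
    fun x i a hxa => x.2 i (hxa.trans (hmem i a))
  let φ : S ⊕ Fin k × W → V := Sum.elim Subtype.val fun p => e p.1 p.2
  have hinj : Function.Injective φ := by
    refine Subtype.val_injective.sumElim ?_ fun x p hxp => hout x p.1 p.2 (congrArg _ hxp)
    rintro ⟨i, a⟩ ⟨j, b⟩ hab
    obtain rfl := hindex (congrArg G.connectedComponentMk hab)
    exact congrArg (Prod.mk i) ((e i).injective (Subtype.ext hab))
  have hsurj : Function.Surjective φ := fun v => by
    by_cases hv : v ∈ S
    · exact ⟨Sum.inl ⟨v, hv⟩, rfl⟩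
    · obtain ⟨i, hi⟩ := not_forall_not.1 hv
      exact ⟨Sum.inr (i, (e i).symm ⟨v, hi⟩), by simp [φ]⟩
  refine ⟨S, ⟨⟨Equiv.ofBijective φ ⟨hinj, hsurj⟩, ?_⟩⟩⟩
  rintro (x | ⟨i, a⟩) (y | ⟨j, b⟩)
  · rw [unionCopies_adj_inl]
    rfl
  · exact iff_of_false (fun h => hout x j b (ConnectedComponent.sound h.reachable))
      not_unionCopies_adj_inl_inr
  · exact iff_of_false (fun h => hout y i a (ConnectedComponent.sound h.symm.reachable))
      not_unionCopies_adj_inr_inl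
  · rw [unionCopies_adj_inr]
    refine ⟨fun h => ?_, ?_⟩
    · obtain rfl := hindex (ConnectedComponent.sound h.reachable)
      exact ⟨rfl, (e i).map_adj_iff.1 h⟩
    · rintro ⟨rfl, h⟩
      exact (e i).map_adj_iff.2 h

theorem sum_card_component [Finite V] [Fintype G.ConnectedComponent] :
    ∑ c : G.ConnectedComponent, Nat.card c = Nat.card V :=
  (Nat.card_sigma (β := fun c : G.ConnectedComponent => c)).symm.trans
    (Nat.card_congr (Equiv.sigmaFiberEquiv G.connectedComponentMk))

theorem two_mul_card_edgeSet_component [Fintype V] [DecidableRel G.Adj]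
    (c : G.ConnectedComponent) [Fintype {v // G.connectedComponentMk v = c}] :
    2 * Nat.card c.toSimpleGraph.edgeSet =
      ∑ v : {v // G.connectedComponentMk v = c}, G.degree v := by
  classical
  let : Fintype c.supp := ‹Fintype {v // G.connectedComponentMk v = c}›
  change 2 * Nat.card (G.induce c.supp).edgeSet = _
  rw [Nat.card_eq_fintype_card, ← edgeFinset_card, ← sum_degrees_eq_twice_card_edges]
  refine Finset.sum_congr rfl fun v _ => ?_
  convert degree_induce_of_neighborSet_subset (G := G) (v := v)
    fun w hw => (ConnectedComponent.mem_supp_congr_adj c hw).1 v.2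

theorem sum_card_edgeSet_component [Finite V] [Fintype G.ConnectedComponent] :
    ∑ c : G.ConnectedComponent, Nat.card c.toSimpleGraph.edgeSet = Nat.card G.edgeSet := by
  classical
  have := Fintype.ofFinite V
  refine Nat.eq_of_mul_eq_mul_left two_pos ?_
  rw [Finset.mul_sum, Nat.card_eq_fintype_card, ← edgeFinset_card,
    ← sum_degrees_eq_twice_card_edges, ← Fintype.sum_fiberwise G.connectedComponentMk]
  exact Finset.sum_congr rfl fun c _ => two_mul_card_edgeSet_component c

end Components

section Counting

variable {V : Type*} [Finite V]

theorem mul_card_le_of_connected {K : SimpleGraph V} (hK : K.Connected) (S : ℕ)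
    [Decidable (K.IsTree ∧ Nat.card V ≤ S)] :
    S * Nat.card V ≤
      (S + 1) * (Nat.card K.edgeSet + if K.IsTree ∧ Nat.card V ≤ S then 1 else 0) := by
  have hle := hK.card_vert_le_card_edgeSet_add_one
  split_ifs with hsmall
  · nlinarith
  · rcases hle.lt_or_eq with hlt | heq
    · nlinarith
    · have hlarge : ¬ Nat.card V ≤ S :=
        not_and.1 hsmall (isTree_iff_connected_and_card.2 ⟨hK, heq.symm⟩)
      nlinarith

theorem card_small_tree_components_le {G : SimpleGraph V} {S k : ℕ}
    (hG : ∀ s ≤ S, ∀ T : SimpleGraph (Fin s), T.IsTree → ¬ HasComponentCopies G k T) :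
    Nat.card {c : G.ConnectedComponent // c.toSimpleGraph.IsTree ∧ Nat.card c ≤ S} ≤
      Nat.card (Σ s : Fin (S + 1), SimpleGraph (Fin s)) * k := by
  classical
  have := Fintype.ofFinite G.ConnectedComponent
  have hmodel : ∀ c : {c : G.ConnectedComponent // c.toSimpleGraph.IsTree ∧ Nat.card c ≤ S},
      ∃ x : (Σ s : Fin (S + 1), SimpleGraph (Fin s)), Nonempty (x.2 ≃g c.1.toSimpleGraph) :=
    fun c => ⟨⟨⟨_, Nat.lt_succ_of_le c.2.2⟩, _⟩, ⟨(Iso.map (Finite.equivFin c.1) _).symm⟩⟩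
  choose model iso using hmodel
  by_contra! hlt
  rw [Nat.card_eq_fintype_card, Nat.card_eq_fintype_card] at hlt
  obtain ⟨x, hx⟩ := Fintype.exists_lt_card_fiber_of_mul_lt_card model hlt
  have hiso : ∀ c, model c = x → Nonempty (x.2 ≃g c.1.toSimpleGraph) := fun c hc => hc ▸ iso c
  obtain ⟨c, hc⟩ := Finset.card_pos.1 (Nat.zero_lt_of_lt hx)
  have hT : x.2.IsTree := (hiso c (Finset.mem_filter.1 hc).2).some.isTree_iff.2 c.2.1
  rw [← Fintype.card_subtype] at hx
  obtain ⟨C⟩ : Nonempty (Fin k ↪ {c // model c = x}) :=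
    Function.Embedding.nonempty_of_card_le (by rw [Fintype.card_fin]; exact hx.le)
  exact hG _ (Nat.le_of_lt_succ x.1.2) x.2 hT
    ⟨C.trans ((Function.Embedding.subtype _).trans (Function.Embedding.subtype _)),
      fun i => hiso _ (C i).2⟩

theorem mul_card_le_of_not_hasComponentCopies {G : SimpleGraph V} {S k : ℕ}
    (hG : ∀ s ≤ S, ∀ T : SimpleGraph (Fin s), T.IsTree → ¬ HasComponentCopies G k T) :
    S * Nat.card V ≤ (S + 1) *
      (Nat.card G.edgeSet + Nat.card (Σ s : Fin (S + 1), SimpleGraph (Fin s)) * k) := by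
  classical
  have := Fintype.ofFinite G.ConnectedComponent
  have hsum := Finset.sum_le_sum fun c (_ : c ∈ (Finset.univ : Finset G.ConnectedComponent)) =>
    mul_card_le_of_connected c.connected_toSimpleGraph S
  rw [← Finset.mul_sum, ← Finset.mul_sum, Finset.sum_add_distrib, sum_card_component,
    sum_card_edgeSet_component, Finset.sum_boole, ← Fintype.card_subtype,
    ← Nat.card_eq_fintype_card] at hsum
  refine hsum.trans (Nat.mul_le_mul_left _ (Nat.add_le_add_left ?_ _))
  exact card_small_tree_components_le hG

end Counting

section Asymptotics

variable {nF : ℕ} {F : SimpleGraph (Fin nF)} {r t k : ℕ} {T : SimpleGraph (Fin t)}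

/-- The excess of `sat(n,F)` over `(1 - 1/r) n`, scaled by `r` to be an integer. -/
noncomputable def satExcess (F : SimpleGraph (Fin nF)) (r n : ℕ) : ℤ :=
  r * satF n F - (r - 1) * n

theorem card_edgeSet_add_one_of_isTree (hT : T.IsTree) : Nat.card T.edgeSet + 1 = t :=
  (isTree_iff_connected_and_card.1 hT).2.trans (Nat.card_fin t)

namespace SatSingle

theorem goodTree_of_hasComponentCopies {V : Type*} {G : SimpleGraph V} (hG : SatSingle F G)
    (hT : T.IsTree) (h : HasComponentCopies G (nF + 2) T) : GoodTree F t T := by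
  obtain ⟨S, ⟨e⟩⟩ := h.exists_iso_unionCopies
  exact (hG.of_iso e.symm).goodTree hT le_rfl

theorem satF_add_le_of_hasComponentCopies {V : Type*} [Finite V] {G : SimpleGraph V}
    (hG : SatSingle F G) [Nonempty (Fin t)] (h : HasComponentCopies G (nF + 2) T) :
    satF (Nat.card V + t) F ≤ Nat.card G.edgeSet + Nat.card T.edgeSet := by
  obtain ⟨S, ⟨e⟩⟩ := h.exists_iso_unionCopies
  have hU := (hG.of_iso e.symm).unionCopies_succ (by rw [Nat.card_fin])
  have hle := satF_le (n := Nat.card V + t) ?_ hU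
  · rwa [card_edgeSet_unionCopies, add_one_mul, ← add_assoc, ← card_edgeSet_unionCopies,
      Nat.card_congr e.mapEdgeSet] at hle
  · rw [← Nat.card_congr e.toEquiv]
    simp only [Nat.card_sum, Nat.card_prod, Nat.card_fin]
    ring

theorem unionCopies_add [Nonempty (Fin t)] {α : Type*} {H : SimpleGraph α} (hk : nF + 2 ≤ k)
    (h : SatSingle F (unionCopies H k T)) (m : ℕ) : SatSingle F (unionCopies H (k + m) T) := by
  induction m with
  | zero => exact h
  | succ m ih => exact ih.unionCopies_succ (by rw [Nat.card_fin]; omega)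

theorem satExcess_le_of_unionCopies {α : Type*} [Finite α] {H : SimpleGraph α}
    (h : SatSingle F (unionCopies H k T)) (hT : T.IsTree) :
    satExcess F t (Nat.card α + k * t) ≤ t * Nat.card H.edgeSet - (t - 1) * Nat.card α := by
  have hle := satF_le (n := Nat.card α + k * t) (by simp) h
  have hcard := card_edgeSet_add_one_of_isTree hT
  rw [card_edgeSet_unionCopies] at hle
  zify at hle hcard
  have hmul := mul_le_mul_of_nonneg_left hle (Nat.cast_nonneg (α := ℤ) t)
  rw [satExcess]
  push_cast
  linear_combination hmul + (k : ℤ) * t * hcard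

end SatSingle

theorem exists_satF_lower_bound (hF : F ≠ ⊥) {S : ℕ}
    (hno : ∀ s ≤ S, ∀ T : SimpleGraph (Fin s), ¬ GoodTree F s T) :
    ∃ M : ℕ, ∀ n, S * n ≤ (S + 1) * (satF n F + M) := by
  refine ⟨Nat.card (Σ s : Fin (S + 1), SimpleGraph (Fin s)) * (nF + 2), fun n => ?_⟩
  obtain ⟨G, hG, hcard⟩ := exists_satSingle_card_eq_satF hF n
  have hle := mul_card_le_of_not_hasComponentCopies (G := G) fun s hs T hT h =>
    hno s hs T (hG.goodTree_of_hasComponentCopies hT h)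
  rwa [hcard, Nat.card_fin] at hle

theorem bddBelow_range_satExcess (hF : F ≠ ⊥) (hr : 1 ≤ r)
    (hno : ∀ s < r, ∀ T : SimpleGraph (Fin s), ¬ GoodTree F s T) :
    BddBelow (Set.range (satExcess F r)) := by
  obtain ⟨S, rfl⟩ := Nat.exists_eq_add_of_le' hr
  obtain ⟨M, hM⟩ := exists_satF_lower_bound hF fun s hs => hno s (Nat.lt_succ_of_le hs)
  refine ⟨-((S + 1) * M), ?_⟩
  rintro _ ⟨n, rfl⟩
  have hn := hM n
  zify at hn
  rw [satExcess]
  push_cast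
  linarith

theorem eventually_satExcess_add_le (hF : F ≠ ⊥) (hr : 1 ≤ r)
    (hno : ∀ s < r, ∀ T : SimpleGraph (Fin s), ¬ GoodTree F s T) (D : ℤ) :
    ∀ᶠ n in atTop, satExcess F r n ≤ D → satExcess F r (n + r) ≤ satExcess F r n := by
  set M := Nat.card (Σ s : Fin (r + 1), SimpleGraph (Fin s)) * (nF + 2)
  refine eventually_atTop.2 ⟨((r + 1) * D + r * (r + 1) * M).toNat + 1, fun n hn hD => ?_⟩
  obtain ⟨G, hG, hcard⟩ := exists_satSingle_card_eq_satF hF n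
  by_cases hex : ∃ s ≤ r, ∃ T : SimpleGraph (Fin s), T.IsTree ∧ HasComponentCopies G (nF + 2) T
  · obtain ⟨s, hs, T, hT, hC⟩ := hex
    obtain rfl : s = r := hs.eq_of_not_lt fun hlt =>
      hno s hlt T (hG.goodTree_of_hasComponentCopies hT hC)
    have := hT.1.nonempty
    have hle := hG.satF_add_le_of_hasComponentCopies hC
    have hT := card_edgeSet_add_one_of_isTree hT
    rw [hcard, Nat.card_fin] at hle
    zify at hle hT
    have hmul := mul_le_mul_of_nonneg_left hle (Nat.cast_nonneg (α := ℤ) s)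
    simp only [satExcess]
    push_cast
    linear_combination hmul + (s : ℤ) * hT
  · push Not at hex
    have hlow := mul_card_le_of_not_hasComponentCopies hex
    rw [hcard, Nat.card_fin] at hlow
    rw [satExcess] at hD
    zify at hlow
    have h₁ := mul_le_mul_of_nonneg_left hlow (Nat.cast_nonneg (α := ℤ) r)
    have h₂ := mul_le_mul_of_nonneg_left hD (show (0 : ℤ) ≤ r + 1 by positivity)
    have hsmall : (n : ℤ) ≤ (r + 1) * D + r * (r + 1) * M := by
      push_cast [M]
      linear_combination h₁ + h₂
    omega

theorem exists_eventually_eq_of_antitone {a : ℕ → ℤ} (hanti : ∀ᶠ m in atTop, a (m + 1) ≤ a m)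
    (hbdd : BddBelow (Set.range a)) : ∃ K, ∀ᶠ m in atTop, a m = K := by
  obtain ⟨m₀, hm₀⟩ := eventually_atTop.1 hanti
  have hanti' : Antitone fun m => a (m + m₀) :=
    antitone_nat_of_succ_le fun m => by
      rw [add_right_comm]
      exact hm₀ _ (Nat.le_add_left _ _)
  have hlim := tendsto_atTop_ciInf hanti' (hbdd.mono (Set.range_comp_subset_range (· + m₀) a))
  rw [tendsto_add_atTop_iff_nat m₀, nhds_discrete, tendsto_pure] at hlim
  exact ⟨_, hlim⟩

theorem exists_eventually_satExcess_eq (hF : F ≠ ⊥)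
    (hno : ∀ s < t, ∀ T : SimpleGraph (Fin s), ¬ GoodTree F s T) (hT : T.IsTree)
    {α : Type*} [Finite α] {H : SimpleGraph α} (hk : nF + 2 ≤ k)
    (hsat : SatSingle F (unionCopies H k T)) :
    ∃ K, ∀ᶠ n in atTop, n % t = Nat.card α % t → satExcess F t n = K := by
  have := hT.1.nonempty
  have ht : 0 < t := Fin.pos_iff_nonempty.2 this
  let n : ℕ → ℕ := fun m => Nat.card α + (k + m) * t
  have htop : Tendsto n atTop atTop := tendsto_atTop_mono
    (fun m => (Nat.le_add_left m k).trans ((Nat.le_mul_of_pos_right _ ht).trans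
      (Nat.le_add_left _ _))) tendsto_id
  have hanti : ∀ᶠ m in atTop, satExcess F t (n (m + 1)) ≤ satExcess F t (n m) := by
    filter_upwards [htop.eventually (eventually_satExcess_add_le hF ht hno _)] with m hm
    have hn : n (m + 1) = n m + t := by simp only [n]; ring
    rw [hn]
    exact hm ((hsat.unionCopies_add hk m).satExcess_le_of_unionCopies hT)
  obtain ⟨K, hK⟩ := exists_eventually_eq_of_antitone (a := satExcess F t ∘ n) hanti
    ((bddBelow_range_satExcess hF ht hno).mono (Set.range_comp_subset_range n _))
  obtain ⟨m₀, hm₀⟩ := eventually_atTop.1 hK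
  refine ⟨K, eventually_atTop.2 ⟨n m₀, fun l hl hmod => ?_⟩⟩
  obtain ⟨d, hd⟩ := (Nat.modEq_iff_dvd' hl).1 ((Nat.add_mul_mod_self_right _ _ _).trans hmod.symm)
  have hld : l = n (m₀ + d) := by
    rw [Nat.sub_eq_iff_eq_add hl] at hd
    rw [hd]
    simp only [n]
    ring
  rw [hld]
  exact hm₀ _ (Nat.le_add_right _ _)

theorem caseIWith_of_minimal_goodTree (hF : F ≠ ⊥)
    (hno : ∀ s < t, ∀ T : SimpleGraph (Fin s), ¬ GoodTree F s T) (hT : T.IsTree)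
    (hsat : ∀ c < t, ∃ (α : Type) (_ : Finite α) (H : SimpleGraph α) (k : ℕ),
      nF + 2 ≤ k ∧ Nat.card α % t = c ∧ SatSingle F (unionCopies H k T)) :
    CaseIWith F t := by
  have hclass : ∀ c, ∃ K, c < t → ∀ᶠ n in atTop, n % t = c → satExcess F t n = K := fun c => by
    by_cases hc : c < t
    · obtain ⟨α, _, H, k, hk, rfl, hU⟩ := hsat c hc
      obtain ⟨K, hK⟩ := exists_eventually_satExcess_eq hF hno hT hk hU
      exact ⟨K, fun _ => hK⟩
    · exact ⟨0, fun h => absurd h hc⟩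
  choose K hK using hclass
  refine ⟨Fin.pos_iff_nonempty.2 hT.1.nonempty, K, fun c hc => (hK c hc).mono fun n hn hmod => ?_⟩
  rw [← hn hmod, satExcess]
  ring

theorem caseII_of_forall_not_goodTree (hF : F ≠ ⊥)
    (hno : ∀ t, ∀ T : SimpleGraph (Fin t), ¬ GoodTree F t T) : CaseII F := by
  refine ⟨fun n => max 0 ((n : ℝ) - satF n F), tendsto_order.2 ⟨fun ε hε => ?_, fun ε hε => ?_⟩,
    fun n => by linarith [le_max_right (0 : ℝ) ((n : ℝ) - satF n F)]⟩
  · exact .of_forall fun n => hε.trans_le (by positivity)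
  · obtain ⟨S, hS⟩ := exists_nat_one_div_lt hε
    obtain ⟨M, hM⟩ := exists_satF_lower_bound hF (S := S) fun s _ => hno s
    have hlim : Tendsto (fun n : ℕ => 1 / ((S : ℝ) + 1) + M / n) atTop (𝓝 (1 / (S + 1))) := by
      simpa using tendsto_const_nhds.add (tendsto_const_div_atTop_nhds_zero_nat (M : ℝ))
    filter_upwards [hlim.eventually_lt_const hS, eventually_gt_atTop 0] with n hn hpos
    have hn₀ : (0 : ℝ) < n := Nat.cast_pos.2 hpos
    refine lt_of_le_of_lt ?_ hn
    rw [div_add_div _ _ (by positivity) hn₀.ne', div_le_div_iff₀ hn₀ (by positivity)]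
    have hMn : (S : ℝ) * n ≤ (S + 1) * (satF n F + M) := by exact_mod_cast hM n
    have hmax : max 0 ((n : ℝ) - satF n F) * (S + 1) ≤ n + (S + 1) * M := by
      rw [max_mul_of_nonneg _ _ (by positivity), zero_mul]
      exact max_le (by positivity) (by linarith)
    nlinarith

theorem exists_goodTree_of_caseIWith (hF : F ≠ ⊥) (h : CaseIWith F r) :
    ∃ (t : ℕ) (T : SimpleGraph (Fin t)), GoodTree F t T := by
  by_contra! hno
  obtain ⟨hr, k, hk⟩ := h
  obtain ⟨M, hM⟩ := exists_satF_lower_bound hF (S := r) fun s _ => hno s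
  have hfreq : ∃ᶠ n : ℕ in atTop, n % r = 0 := Nat.frequently_mod_eq hr
  have hlarge : ∀ᶠ n : ℕ in atTop, ((r + 1) * (k 0 + r * M) : ℤ) < n :=
    tendsto_natCast_atTop_atTop.eventually_gt_atTop _
  obtain ⟨n, hn, hkn, hlt⟩ := (hfreq.and_eventually ((hk 0 hr).and hlarge)).exists
  have hsat := hkn hn
  have hMn : (r : ℤ) * n ≤ (r + 1) * (satF n F + M) := by exact_mod_cast hM n
  have hmul := mul_le_mul_of_nonneg_left hMn (Nat.cast_nonneg (α := ℤ) r)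
  have hle : (n : ℤ) ≤ (r + 1) * (k 0 + r * M) := by
    linear_combination hmul + (r + 1) * hsat
  omega

end Asymptotics

/-- The complete graph on `C` with pendant vertices `z : Z` attached to `π z`; together with copies
of `T` it is the graph from which saturated graphs are built. -/
def cliqueWithPendants {C Z : Type*} (π : Z → C) : SimpleGraph (C ⊕ Z) :=
  SimpleGraph.fromRel fun x y =>
    match x, y with
    | Sum.inl _, Sum.inl _ => True
    | Sum.inl x, Sum.inr z => π z = x
    | _, _ => False

section CliqueWithPendants

variable {C Z V W : Type*} {π : Z → C} {F : SimpleGraph V} {T : SimpleGraph W} {k : ℕ}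

@[simp] theorem cliqueWithPendants_adj_inl {x y : C} :
    (cliqueWithPendants π).Adj (Sum.inl x) (Sum.inl y) ↔ x ≠ y := by
  simp [cliqueWithPendants]

@[simp] theorem cliqueWithPendants_adj_inr {z : Z} {y : C ⊕ Z} :
    (cliqueWithPendants π).Adj (Sum.inr z) y ↔ y = Sum.inl (π z) := by
  rcases y with y | y <;> simp [cliqueWithPendants, eq_comm]

theorem not_contains_unionCopies_cliqueWithPendants [Finite C] {N : Set V}
    (hN : N ⊆ essential F T) (hdeg : ∀ a ∈ N, IsEmpty Z ∨ (F.neighborSet a).Nontrivial)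
    (hcard : Nat.card C < N.ncard) : ¬ Contains (unionCopies (cliqueWithPendants π) k T) F := by
  intro hF
  obtain ⟨f, hf⟩ := contains_induce_essential hF
  have hclique : ∀ a : N, ∃ x, f ⟨a, hN a.2⟩ = Sum.inl x := by
    rintro ⟨a, ha⟩
    rcases hfa : f ⟨a, hN ha⟩ with x | z
    · exact ⟨x, rfl⟩
    obtain hZ | ⟨b, hb, c, hc, hbc⟩ := hdeg a ha
    · exact hZ.elim z
    have hπ : ∀ b (hb : F.Adj a b), f ⟨b, mem_essential_of_adj (hN ha) hb⟩ = Sum.inl (π z) :=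
      fun b hb => cliqueWithPendants_adj_inr.1 (hfa ▸ hf ⟨a, hN ha⟩ ⟨b, _⟩ hb)
    exact absurd (congrArg Subtype.val (f.injective ((hπ b hb).trans (hπ c hc).symm))) hbc
  choose g hg using hclique
  have hinj : Function.Injective g := fun a b hab => by
    have hf : f ⟨a, hN a.2⟩ = f ⟨b, hN b.2⟩ := by rw [hg, hg, hab]
    exact Subtype.ext (Subtype.mk.inj (f.injective hf))
  exact hcard.not_ge (Nat.card_le_card_of_injective g hinj)

end CliqueWithPendants

section Saturation

variable {α V W : Type*} {F : SimpleGraph V} {T : SimpleGraph W} {k : ℕ}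

theorem exists_satSingle_unionCopies [Finite α] {H₀ : SimpleGraph α}
    (hfree : ¬ Contains (unionCopies H₀ k T) F)
    (hcross : ∀ x p, Contains (unionCopies H₀ k T ⊔ edge (Sum.inl x) (Sum.inr p)) F)
    (hcopies : ∀ p q, p ≠ q → ¬ (p.1 = q.1 ∧ T.Adj p.2 q.2) →
      Contains (unionCopies H₀ k T ⊔ edge (Sum.inr p) (Sum.inr q)) F) :
    ∃ H : SimpleGraph α, SatSingle F (unionCopies H k T) := by
  obtain ⟨H, hle, hH, hmax⟩ :=
    exists_le_maximal_sup_edge (p := fun H => ¬ Contains (unionCopies H k T) F) hfree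
  have hmono : ∀ {x y}, Contains (unionCopies H₀ k T ⊔ edge x y) F →
      Contains (unionCopies H k T ⊔ edge x y) F :=
    Contains.mono (sup_le_sup_right (unionCopies_mono k T hle) _)
  refine ⟨H, hH, ?_⟩
  rintro (x | p) (y | q) hxy hadj
  · exact (not_not.1 (hmax x y (fun h => hxy (congrArg _ h)) (mt unionCopies_adj_inl.2 hadj))).mono
      (unionCopies_sup_edge_le H k T x y)
  · exact hmono (hcross x q)
  · rw [Sym2.eq_swap]
    exact hmono (hcross y p)
  · exact hmono (hcopies p q (fun h => hxy (congrArg _ h)) (mt unionCopies_adj_inr.2 hadj))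

end Saturation

section Seed

variable {V W C Z : Type*} {F : SimpleGraph V} {T : SimpleGraph W} {N P : Set V} {π : Z → C}
  {k d : ℕ} {G : SimpleGraph ((C ⊕ Z) ⊕ Fin k × W)} {f : V → (C ⊕ Z) ⊕ Fin k × W}

/-- `H ∪ kT`, with `H` the clique on `C` with pendant vertices given by `π`, is a host for `F` with
core `N` and deficiency `d`: the clique is `d` vertices too small for `N`, the essential vertices
outside `N` are leaves of `F` attached to `N`, and there are enough pendant vertices and copies of
`T` to embed greedily whatever remains after `N`. -/
structure IsHost (F : SimpleGraph V) (T : SimpleGraph W) (N : Set V) (π : Z → C) (k d : ℕ) :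
    Prop where
  subset : N ⊆ essential F T
  leaf : ∀ a ∈ essential F T \ N, ∃ m ∈ N, ∀ b, F.Adj a b ↔ b = m
  pendants : (essential F T \ N).Nonempty → ∀ x, Nat.card V ≤ (π ⁻¹' {x}).ncard
  card_le : Nat.card V ≤ k
  card_add : Nat.card C + d = N.ncard

/-- The vertices of the clique used by the restriction of `f` to `P`. -/
def usedClique (f : V → (C ⊕ Z) ⊕ Fin k × W) (P : Set V) : Set C :=
  {x | Sum.inl (Sum.inl x) ∈ f '' P}

/-- A partial copy of the essential part of `F` whose boundary lies in the clique and which covers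
`d` more vertices of the core `N` than it uses vertices of the clique. -/
structure IsSeed (F : SimpleGraph V) (T : SimpleGraph W) (N : Set V) (d : ℕ)
    (G : SimpleGraph ((C ⊕ Z) ⊕ Fin k × W)) (P : Set V) (f : V → (C ⊕ Z) ⊕ Fin k × W) : Prop
    extends IsPartialCopy F G P f where
  subset : P ⊆ essential F T
  boundary : ∀ a ∈ P, ∀ b ∉ P, F.Adj a b → ∃ x, f a = Sum.inl (Sum.inl x)
  ncard_add_le : (usedClique f P).ncard + d ≤ (N ∩ P).ncard

theorem usedClique_insert {g : V → (C ⊕ Z) ⊕ Fin k × W} (hg : Set.EqOn g f P) (a : V) :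
    usedClique g (insert a P) = {x | Sum.inl (Sum.inl x) = g a} ∪ usedClique f P := by
  ext x
  simp only [usedClique, Set.image_insert_eq, hg.image_eq]
  rfl

namespace IsSeed

variable [Finite V]

theorem exists_insert_core (h : IsSeed F T N d G P f) (hH : IsHost F T N π k d)
    (hG : unionCopies (cliqueWithPendants π) k T ≤ G) {a : V} (haN : a ∈ N) (haP : a ∉ P) :
    ∃ g, IsSeed F T N d G (insert a P) g := by
  have hcard := hH.card_add
  have hle := h.ncard_add_le
  have hN : (N ∩ insert a P).ncard = (N ∩ P).ncard + 1 := by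
    rw [Set.inter_insert_of_mem haN, Set.ncard_insert_of_notMem fun h => haP h.2]
  have hNle : (N ∩ insert a P).ncard ≤ N.ncard := Set.ncard_le_ncard Set.inter_subset_left
  obtain ⟨x, hx⟩ := (Set.ne_univ_iff_exists_notMem (usedClique f P)).1 fun hU => by
    rw [hU, Set.ncard_univ] at hle
    omega
  obtain ⟨g, hg, hgf, hga⟩ := h.exists_insert (x := Sum.inl (Sum.inl x)) haP
    (fun b hb hbx => hx ⟨b, hb, hbx⟩) fun b hb hba => by
      obtain ⟨y, hy⟩ := h.boundary b hb a haP hba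
      rw [hy]
      refine hG (unionCopies_adj_inl.2 (cliqueWithPendants_adj_inl.2 ?_))
      rintro rfl
      exact hx ⟨b, hb, hy⟩
  refine ⟨g, hg, Set.insert_subset (hH.subset haN) h.subset, ?_, ?_⟩
  · rintro b (rfl | hb) c hc hbc
    · exact ⟨x, hga⟩
    · rw [hgf hb]
      exact h.boundary b hb c (fun hcP => hc (Or.inr hcP)) hbc
  · have hused : usedClique g (insert a P) = insert x (usedClique f P) := by
      rw [usedClique_insert hgf, hga, Set.insert_eq]
      simp
    have := Set.ncard_insert_le x (usedClique f P)
    rw [hused]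
    omega

theorem exists_insert_leaf (h : IsSeed F T N d G P f) (hH : IsHost F T N π k d)
    (hG : unionCopies (cliqueWithPendants π) k T ≤ G) (hNP : N ⊆ P) {a : V}
    (ha : a ∈ essential F T) (haP : a ∉ P) : ∃ g, IsSeed F T N d G (insert a P) g := by
  have haN : a ∈ essential F T \ N := ⟨ha, fun haN => haP (hNP haN)⟩
  obtain ⟨m, hmN, hm⟩ := hH.leaf a haN
  obtain ⟨x, hx⟩ := h.boundary m (hNP hmN) a haP ((hm m).2 rfl).symm
  obtain ⟨z, rfl, hz⟩ : ∃ z, π z = x ∧ Sum.inl (Sum.inr z) ∉ f '' P := by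
    by_contra! hall
    have hlt : P.ncard < Nat.card V := Set.ncard_lt_card fun h => haP (h ▸ trivial)
    have hle : (π ⁻¹' {x}).ncard ≤ (f '' P).ncard :=
      Set.ncard_le_ncard_of_injOn (fun z => Sum.inl (Sum.inr z)) hall
        (fun _ _ _ _ h => by simpa using h)
    exact ((hH.pendants ⟨a, haN⟩ x).trans (hle.trans Set.ncard_image_le)).not_gt hlt
  obtain ⟨g, hg, hgf, hga⟩ := h.exists_insert (x := Sum.inl (Sum.inr z)) haP
    (fun b hb hbz => hz ⟨b, hb, hbz⟩) fun b _ hba => by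
      rw [(hm b).1 hba.symm, hx]
      exact hG (unionCopies_adj_inl.2 (cliqueWithPendants_adj_inr.2 rfl).symm)
  refine ⟨g, hg, Set.insert_subset ha h.subset, ?_, ?_⟩
  · rintro b (rfl | hb) c hc hbc
    · exact absurd (Or.inr (hNP ((hm c).1 hbc ▸ hmN))) hc
    · rw [hgf hb]
      exact h.boundary b hb c (fun hcP => hc (Or.inr hcP)) hbc
  · have hused : usedClique g (insert a P) = usedClique f P := by
      rw [usedClique_insert hgf, hga]
      simp
    rw [hused]
    exact h.ncard_add_le.trans (Set.ncard_le_ncard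
      (Set.inter_subset_inter_right N (Set.subset_insert a P)))

theorem contains (h : IsSeed F T N d G P f) (hH : IsHost F T N π k d)
    (hG : unionCopies (cliqueWithPendants π) k T ≤ G) : Contains G F := by
  induction hn : (essential F T \ P).ncard using Nat.strong_induction_on generalizing P f with
  | _ n ih =>
    by_cases hP : essential F T ⊆ P
    · exact (h.mono hP).contains_of_essential hH.card_le hG
    obtain ⟨a, ⟨ha, haP⟩, g, hg⟩ :
        ∃ a ∈ essential F T \ P, ∃ g, IsSeed F T N d G (insert a P) g := by
      by_cases hNP : N ⊆ P
      · obtain ⟨a, ha, haP⟩ := Set.not_subset.1 hP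
        exact ⟨a, ⟨ha, haP⟩, h.exists_insert_leaf hH hG hNP ha haP⟩
      · obtain ⟨a, ha, haP⟩ := Set.not_subset.1 hNP
        exact ⟨a, ⟨hH.subset ha, haP⟩, h.exists_insert_core hH hG ha haP⟩
    refine ih _ (hn ▸ Set.ncard_lt_ncard ?_) hg rfl
    exact ⟨Set.sdiff_subset_sdiff_right (Set.subset_insert a P),
      fun hsub => (hsub ⟨ha, haP⟩).2 (Or.inl rfl)⟩

end IsSeed

end Seed

/-- A copy in `T` of a set `S` of essential vertices of `F` that is attached to the rest of `F` only
by the edge from its vertex `q` to the vertex `m` outside `S`. -/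
structure IsBranch {V W : Type*} (F : SimpleGraph V) (T : SimpleGraph W) (S : Set V) (f : V → W)
    (q m : V) : Prop extends IsPartialCopy F T S f where
  subset : S ⊆ essential F T
  root_mem : q ∈ S
  notMem : m ∉ S
  adj_root : F.Adj q m
  eq_of_adj : ∀ a ∈ S, ∀ b ∉ S, F.Adj a b → a = q ∧ b = m

/-- A component of `F` inside `2T+e`, where `e` joins `ℓ` to `u`: its parts `A` and `B` in the two
copies of `T`, linked by the edge from `s ∈ A`, placed at `ℓ`, to `y ∈ B`, placed at `u`. -/
structure IsJoin {V W : Type*} (F : SimpleGraph V) (T : SimpleGraph W) (ℓ u : W) (A B : Set V)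
    (f g : V → W) (s y : V) : Prop where
  left : IsBranch F T A f s y
  right : IsBranch F T B g y s
  map_left : f s = ℓ
  map_right : g y = u
  disjoint : Disjoint A B

section Joins

variable {V W : Type*} {F : SimpleGraph V} {T : SimpleGraph W} {S A B : Set V} {f g : V → W}
  {q m s y : V} {ℓ u : W}

theorem IsJoin.symm (h : IsJoin F T ℓ u A B f g s y) : IsJoin F T u ℓ B A g f y s :=
  ⟨h.right, h.left, h.map_right, h.map_left, h.disjoint.symm⟩

theorem exists_isBranch_preimage_range {X : Type*} {G : SimpleGraph X} {φ : W → X} {h : V → X}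
    {w : W} {x : X} (hh : IsPartialCopy F (G ⊔ edge (φ w) x) S h) (hsub : S ⊆ essential F T)
    (hS : ∀ a ∈ S, ∀ b, F.Adj a b → b ∈ S) (hφ : Function.Injective φ)
    (hadj : ∀ v w, G.Adj (φ v) (φ w) → T.Adj v w)
    (hclosed : ∀ v z, G.Adj (φ v) z → z ∈ Set.range φ) (hx : x ∉ Set.range φ) (hq : q ∈ S)
    (hqm : F.Adj q m) (hhq : h q = φ w) (hhm : h m = x) :
    ∃ f, IsBranch F T (S ∩ h ⁻¹' Set.range φ) f q m ∧ f q = w := by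
  have : Nonempty W := ⟨w⟩
  have hcopy : IsPartialCopy F T (S ∩ h ⁻¹' Set.range φ) (Function.invFun φ ∘ h) :=
    (hh.mono Set.inter_subset_left).of_comp (φ := φ)
      (fun v z hvz => by
        rcases sup_edge_adj.1 hvz with hvz | ⟨⟨-, hz⟩ | ⟨hv, -⟩, -⟩
        · exact hadj v z hvz
        · exact absurd ⟨z, hz⟩ hx
        · exact absurd ⟨v, hv⟩ hx)
      fun a ha => Function.invFun_eq ha.2
  refine ⟨_, ⟨hcopy, Set.inter_subset_left.trans hsub, ⟨hq, w, hhq.symm⟩, ?_, hqm, ?_⟩, ?_⟩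
  · exact fun hm => hx (hhm ▸ hm.2)
  · rintro a ⟨ha, v, hv⟩ b hb hab
    have hbS := hS a ha b hab
    have hbφ : h b ∉ Set.range φ := fun hbφ => hb ⟨hbS, hbφ⟩
    rcases sup_edge_adj.1 (hh.adj a ha b hbS hab) with hab' | ⟨⟨haw, hbx⟩ | ⟨-, hbw⟩, -⟩
    · exact absurd (hclosed v _ (hv ▸ hab')) hbφ
    · exact ⟨hh.injOn ha hq (haw.trans hhq.symm),
        hh.injOn hbS (hS q hq m hqm) (hbx.trans hhm.symm)⟩
    · exact absurd ⟨w, hbw.symm⟩ hbφ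
  · rw [Function.comp_apply, hhq, Function.leftInverse_invFun hφ]

theorem exists_isJoin_of_isPartialCopy {h : V → W ⊕ W}
    (hh : IsPartialCopy F ((T ⊕g T) ⊔ edge (Sum.inl ℓ) (Sum.inr u)) S h)
    (hsub : S ⊆ essential F T) (hS : ∀ a ∈ S, ∀ b, F.Adj a b → b ∈ S) (hne : S.Nonempty) :
    ∃ A B f g s y, IsJoin F T ℓ u A B f g s y := by
  have hinl : ∀ v z, (T ⊕g T).Adj (Sum.inl v) z → z ∈ Set.range Sum.inl := by
    rintro v (z | z) hz
    exacts [⟨z, rfl⟩, by simp at hz]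
  have hinr : ∀ v z, (T ⊕g T).Adj (Sum.inr v) z → z ∈ Set.range Sum.inr := by
    rintro v (z | z) hz
    exacts [by simp at hz, ⟨z, rfl⟩]
  obtain ⟨s, hs, y, hy, hsy, hhs, hhy⟩ := hh.exists_adj_of_sup_edge fun hsum => by
    obtain ⟨a, ha⟩ := hne
    refine hsub ha ?_
    rcases hha : h a with w | w
    · exact hsum.contains_supp_of_mem_range hS (fun _ _ => sum_adj_inl.1) hinl ha ⟨w, hha.symm⟩
    · exact hsum.contains_supp_of_mem_range hS (fun _ _ => sum_adj_inr.1) hinr ha ⟨w, hha.symm⟩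
  obtain ⟨f, hf, hfs⟩ := exists_isBranch_preimage_range hh hsub hS Sum.inl_injective
    (fun _ _ => sum_adj_inl.1) hinl (by simp) hs hsy hhs hhy
  rw [edge_comm] at hh
  obtain ⟨g, hg, hgy⟩ := exists_isBranch_preimage_range hh hsub hS Sum.inr_injective
    (fun _ _ => sum_adj_inr.1) hinr (by simp) hy hsy.symm hhy hhs
  refine ⟨_, _, f, g, s, y, hf, hg, hfs, hgy, Set.disjoint_left.2 ?_⟩
  rintro a ⟨-, v, hv⟩ ⟨-, w, hw⟩
  exact Sum.inl_ne_inr (hv.trans hw.symm)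

theorem supp_subset_essential {c : F.ConnectedComponent} (hc : ¬ Contains T (F.induce c.supp)) :
    c.supp ⊆ essential F T := by
  rintro a rfl
  exact hc

theorem GoodTree.exists_isJoin {n r : ℕ} {F : SimpleGraph (Fin n)} {T : SimpleGraph (Fin r)}
    (hT : GoodTree F r T) (ℓ u : Fin r) : ∃ A B f g s y, IsJoin F T ℓ u A B f g s y := by
  obtain ⟨c, hc, h⟩ := hT.2.2 ℓ u
  rw [disjUnionG_eq_sum] at h
  have : Nonempty (Fin r ⊕ Fin r) := ⟨Sum.inl ℓ⟩
  obtain ⟨h, hh⟩ := h.exists_isPartialCopy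
  exact exists_isJoin_of_isPartialCopy hh (supp_subset_essential hc)
    (fun _ ha _ hab => c.mem_supp_of_adj_mem_supp ha hab) c.nonempty_supp

end Joins

/-- The essential vertices of degree at least two; the clique of the host graph has one vertex less
than the core when `T` has at least three vertices. -/
def core {V W : Type*} (F : SimpleGraph V) (T : SimpleGraph W) : Set V :=
  {a ∈ essential F T | (F.neighborSet a).Nontrivial}

/-- A leaf `q` of the subgraph of `F` induced on the core, with neighbour `m` in the core. -/
structure IsCoreLeaf {V W : Type*} (F : SimpleGraph V) (T : SimpleGraph W) (q m : V) : Prop where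
  left_mem : q ∈ core F T
  right_mem : m ∈ core F T
  adj : F.Adj q m
  eq_of_mem_core : ∀ b ∈ core F T, F.Adj q b → b = m

section Core

variable {V W : Type*} {F : SimpleGraph V} {T : SimpleGraph W} {S R : Set V} {f : V → W}
  {a b q m : V} {t u : W}

theorem neighborSet_subsingleton_of_notMem_core (ha : a ∈ essential F T) (hac : a ∉ core F T) :
    (F.neighborSet a).Subsingleton :=
  Set.not_nontrivial_iff.1 fun h => hac ⟨ha, h⟩

theorem exists_isPartialCopy_star [Finite W] [Finite V] (hR : R ⊆ F.neighborSet q)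
    (hle : R.ncard ≤ (T.neighborSet t).ncard) (hind : ∀ a ∈ R, ∀ b ∈ R, ¬ F.Adj a b) :
    ∃ f, IsPartialCopy F T (insert q R) f ∧ f q = t := by
  have : Nonempty W := ⟨t⟩
  obtain ⟨g, hg, hinj⟩ := R.toFinite.exists_injOn_of_encard_le (t := T.neighborSet t) (by
    rwa [← R.toFinite.cast_ncard_eq, ← (T.neighborSet t).toFinite.cast_ncard_eq, Nat.cast_le])
  have hcopy : IsPartialCopy F T R g := ⟨hinj, fun a ha b hb hab => absurd hab (hind a ha b hb)⟩
  have htg : ∀ a ∈ R, T.Adj t (g a) := hg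
  obtain ⟨f, hf, -, hfq⟩ := hcopy.exists_insert (fun hq => F.irrefl (hR hq))
    (fun a ha => (htg a ha).ne') fun a ha _ => (htg a ha).symm
  exact ⟨f, hf, hfq⟩

theorem exists_mem_core_adj [Finite W] [Finite V] (ha : a ∈ essential F T)
    (hle : (F.neighborSet a).ncard ≤ (T.neighborSet t).ncard) : ∃ m ∈ core F T, F.Adj a m := by
  by_contra! hno
  have hleaf : ∀ b ∈ F.neighborSet a, ∀ c, F.Adj b c → c = a := fun b hb c hbc =>
    neighborSet_subsingleton_of_notMem_core (mem_essential_of_adj ha hb) (fun h => hno b h hb)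
      hbc hb.symm
  obtain ⟨f, hf, -⟩ := exists_isPartialCopy_star subset_rfl hle fun b hb c hc hbc =>
    F.irrefl (hleaf b hb c hbc ▸ hc)
  refine ha (hf.contains_supp ?_ (Set.mem_insert a _))
  rintro b (rfl | hb) c hbc
  · exact Or.inr hbc
  · exact Or.inl (hleaf b hb c hbc)

theorem exists_mem_core_of_notMem_core [Finite W] [Finite V] (hT : ∃ v w, T.Adj v w)
    (ha : a ∈ essential F T) (hac : a ∉ core F T) :
    ∃ m ∈ core F T, ∀ b, F.Adj a b ↔ b = m := by
  obtain ⟨v, w, hvw⟩ := hT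
  have hsub := neighborSet_subsingleton_of_notMem_core ha hac
  obtain ⟨m, hm, ham⟩ := exists_mem_core_adj (t := v) ha
    ((Set.ncard_le_one_iff_subsingleton.2 hsub).trans
      ((Set.ncard_pos (Set.toFinite _)).2 ⟨w, hvw⟩))
  exact ⟨m, hm, fun b => ⟨fun hab => hsub hab ham, fun hb => hb ▸ ham⟩⟩

theorem mem_core_or_mem_core [Finite W] [Finite V] (hT : ∃ v w, T.Adj v w)
    (ha : a ∈ essential F T) (hab : F.Adj a b) : a ∈ core F T ∨ b ∈ core F T := by
  by_contra! h
  obtain ⟨m, hm, hma⟩ := exists_mem_core_of_notMem_core hT ha h.1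
  exact h.2 ((hma b).1 hab ▸ hm)

namespace IsBranch

theorem mem_core_iff (h : IsBranch F T S f q m) : q ∈ core F T ↔ ∃ t ∈ S, F.Adj q t := by
  refine ⟨fun hq => ?_, fun ⟨t, ht, hqt⟩ =>
    ⟨h.subset h.root_mem, t, hqt, m, h.adj_root, fun htm => h.notMem (htm ▸ ht)⟩⟩
  obtain ⟨b, hb, hbm⟩ := hq.2.exists_ne m
  exact ⟨b, by_contra fun hbS => hbm (h.eq_of_adj q h.root_mem b hbS hb).2, hb⟩

theorem nontrivial_of_mem_core (h : IsBranch F T S f q m) (hq : q ∈ core F T) : S.Nontrivial := by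
  obtain ⟨t, ht, hqt⟩ := h.mem_core_iff.1 hq
  exact ⟨q, h.root_mem, t, ht, hqt.ne⟩

theorem neighborSet_subset (h : IsBranch F T S f q m) (hq : (T.neighborSet (f q)).Subsingleton)
    (ht : a ∈ S) (hqt : F.Adj q a) : F.neighborSet q ⊆ {a, m} := by
  intro b hb
  by_cases hbS : b ∈ S
  · exact Or.inl (h.injOn hbS ht (hq (h.adj q h.root_mem b hbS hb) (h.adj q h.root_mem a ht hqt)))
  · exact Or.inr (h.eq_of_adj q h.root_mem b hbS hb).2

end IsBranch

theorem exists_mem_core_adj_of_neighborSet_subset [Finite W] [Finite V] (hq : q ∈ essential F T)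
    (hN : F.neighborSet q ⊆ {a, m}) (ht : (T.neighborSet t).Nontrivial) :
    ∃ b ∈ core F T, F.Adj q b := by
  have hpair : ({a, m} : Set V).ncard ≤ 2 := (Set.ncard_insert_le a {m}).trans (by simp)
  exact exists_mem_core_adj hq
    ((Set.ncard_le_ncard hN).trans (hpair.trans (Set.one_lt_ncard_iff_nontrivial.2 ht)))

theorem isCoreLeaf_of_neighborSet_subset [Finite W] [Finite V] (hq : q ∈ core F T)
    (hN : F.neighborSet q ⊆ {a, m}) (ha : a ∉ core F T) (ht : (T.neighborSet t).Nontrivial) :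
    IsCoreLeaf F T q m := by
  obtain ⟨b, hb, hqb⟩ := exists_mem_core_adj_of_neighborSet_subset hq.1 hN ht
  have heq : ∀ b ∈ core F T, F.Adj q b → b = m := fun b hb hqb =>
    (hN hqb).resolve_left fun hba => ha (hba ▸ hb)
  obtain rfl := heq b hb hqb
  exact ⟨hq, hb, hqb, heq⟩

theorem IsCoreLeaf.exists_isBranch [Finite W] [Finite V] (h : IsCoreLeaf F T q m)
    (hdeg : (F.neighborSet q \ {m}).ncard ≤ (T.neighborSet u).ncard) :
    ∃ f, IsBranch F T (insert q (F.neighborSet q \ {m})) f q m ∧ f q = u := by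
  have hq := h.left_mem.1
  have hleaf : ∀ b ∈ F.neighborSet q \ {m}, ∀ c, F.Adj b c → c = q := fun b hb c hbc =>
    neighborSet_subsingleton_of_notMem_core (mem_essential_of_adj hq hb.1)
      (fun hbc => hb.2 (h.eq_of_mem_core b hbc hb.1)) hbc hb.1.symm
  obtain ⟨f, hf, hfq⟩ := exists_isPartialCopy_star Set.sdiff_subset hdeg fun b hb c hc hbc =>
    F.irrefl (hleaf b hb c hbc ▸ hc.1)
  refine ⟨f, ⟨hf, ?_, Set.mem_insert q _, ?_, h.adj, ?_⟩, hfq⟩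
  · exact Set.insert_subset hq fun b hb => mem_essential_of_adj hq hb.1
  · rintro (hmq | hm)
    · exact h.adj.ne' hmq
    · exact hm.2 rfl
  · rintro b (rfl | hb) c hc hbc
    · exact ⟨rfl, by_contra fun hcm => hc (Or.inr ⟨hbc, hcm⟩)⟩
    · exact absurd (Or.inl (hleaf b hb c hbc)) hc

end Core

section Seeding

variable {V W C Z : Type*} {F : SimpleGraph V} {T : SimpleGraph W} {N S A B : Set V} {π : Z → C}
  {k d : ℕ} {G : SimpleGraph ((C ⊕ Z) ⊕ Fin k × W)} {f g : V → W} {q m s t y : V} {ℓ u v : W}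
  {i j : Fin k} {x : C} {z : Z}

theorem usedClique_eq_empty {f : V → (C ⊕ Z) ⊕ Fin k × W} (hf : ∀ a ∈ S, ∃ p, f a = Sum.inr p) :
    usedClique f S = ∅ := by
  refine Set.eq_empty_of_forall_notMem ?_
  rintro x ⟨a, ha, hax⟩
  obtain ⟨p, hp⟩ := hf a ha
  exact Sum.inl_ne_inr (hax.symm.trans hp)

theorem IsHost.contains_of_closed [Finite V] {p : V → (C ⊕ Z) ⊕ Fin k × W}
    (hH : IsHost F T N π k d) (hG : unionCopies (cliqueWithPendants π) k T ≤ G)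
    (hN : ∀ a ∈ essential F T, d ≤ (N ∩ (F.connectedComponentMk a).supp).ncard)
    (hp : IsPartialCopy F G S p) (hinr : ∀ a ∈ S, ∃ w, p a = Sum.inr w)
    (hsub : S ⊆ essential F T) (hS : ∀ a ∈ S, ∀ b, F.Adj a b → b ∈ S) (hne : S.Nonempty) :
    Contains G F := by
  obtain ⟨a, ha⟩ := hne
  have hd : d ≤ (N ∩ S).ncard := (hN a (hsub ha)).trans
    (Set.ncard_le_ncard (Set.inter_subset_inter_right N (supp_subset_of_mem hS ha)))
  have hseed : IsSeed F T N d G S p :=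
    ⟨hp, hsub, fun a ha b hb hab => absurd (hS a ha b hab) hb, by
      simpa [usedClique_eq_empty hinr] using hd⟩
  exact hseed.contains hH hG

namespace IsJoin

theorem mem_union_of_adj (h : IsJoin F T ℓ u A B f g s y) {a b : V} (ha : a ∈ A ∪ B)
    (hab : F.Adj a b) : b ∈ A ∪ B := by
  by_contra hb
  rw [Set.mem_union, not_or] at hb
  rcases ha with ha | ha
  · exact hb.2 ((h.left.eq_of_adj a ha b hb.1 hab).2 ▸ h.right.root_mem)
  · exact hb.1 ((h.right.eq_of_adj a ha b hb.2 hab).2 ▸ h.left.root_mem)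

theorem exists_isPartialCopy_union (h : IsJoin F T ℓ u A B f g s y)
    (hG : unionCopies (cliqueWithPendants π) k T ≤ G) (hij : i ≠ j)
    (he : G.Adj (Sum.inr (i, ℓ)) (Sum.inr (j, u))) :
    ∃ p, IsPartialCopy F G (A ∪ B) p ∧ ∀ a ∈ A ∪ B, ∃ w, p a = Sum.inr w := by
  obtain ⟨p, hp, hpA, hpB⟩ := (h.left.inr_copy hG i).exists_union (h.right.inr_copy hG j)
    (fun a _ b _ hab => hij (by simpa using congrArg (Sum.elim (fun _ => i) Prod.fst) hab))
    (fun a ha b hb hab => by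
      obtain ⟨rfl, rfl⟩ := h.left.eq_of_adj a ha b (h.disjoint.notMem_of_mem_right hb) hab
      rwa [h.map_left, h.map_right]) h.disjoint
  exact ⟨p, hp, fun a ha => ha.elim (fun ha => ⟨_, hpA ha⟩) fun ha => ⟨_, hpB ha⟩⟩

end IsJoin

theorem GoodTree.contains_sup_edge_inr {n r : ℕ} {F : SimpleGraph (Fin n)}
    {T : SimpleGraph (Fin r)} {N : Set (Fin n)} (hT : GoodTree F r T) (hH : IsHost F T N π k d)
    (hN : ∀ a ∈ essential F T, d ≤ (N ∩ (F.connectedComponentMk a).supp).ncard)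
    {p q : Fin k × Fin r} (hpq : p ≠ q) (hadj : ¬ (p.1 = q.1 ∧ T.Adj p.2 q.2)) :
    Contains (unionCopies (cliqueWithPendants π) k T ⊔ edge (Sum.inr p) (Sum.inr q)) F := by
  obtain ⟨i, u⟩ := p
  obtain ⟨j, v⟩ := q
  have he := sup_edge_adj (G := unionCopies (cliqueWithPendants π) k T).2
    (Or.inr ⟨Or.inl ⟨rfl, rfl⟩, Sum.inr_injective.ne hpq⟩)
  by_cases hij : i = j
  · subst hij
    have : Nonempty (Fin r) := ⟨u⟩
    obtain ⟨c, hc, hTc⟩ := hT.2.1 u v (by simpa using hpq) (by simpa using hadj)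
    obtain ⟨f, hf⟩ := hTc.exists_isPartialCopy
    let φ : Fin r → (C ⊕ Z) ⊕ Fin k × Fin r := fun w => Sum.inr (i, w)
    have hφ : Function.Injective φ := fun _ _ h => by simpa [φ] using h
    exact hH.contains_of_closed le_sup_left hN
      (hf.comp hφ fun _ _ => map_sup_edge_adj hφ fun _ _ h => unionCopies_adj_inr.2 ⟨rfl, h⟩)
      (fun a _ => ⟨_, rfl⟩) (supp_subset_essential hc)
      (fun _ ha _ hab => c.mem_supp_of_adj_mem_supp ha hab) c.nonempty_supp
  · obtain ⟨A, B, f, g, s, y, h⟩ := hT.exists_isJoin u v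
    obtain ⟨p, hp, hinr⟩ := h.exists_isPartialCopy_union le_sup_left hij he
    exact hH.contains_of_closed le_sup_left hN hp hinr
      (Set.union_subset h.left.subset h.right.subset) (fun _ ha _ => h.mem_union_of_adj ha)
      ⟨s, Or.inl h.left.root_mem⟩

namespace IsBranch

theorem exists_insert_copy (h : IsBranch F T S f q m)
    (hG : unionCopies (cliqueWithPendants π) k T ≤ G) {c : C ⊕ Z}
    (he : G.Adj (Sum.inl c) (Sum.inr (i, f q))) :
    ∃ p, IsPartialCopy F G (insert m S) p ∧ Set.EqOn p (fun a => Sum.inr (i, f a)) S ∧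
      p m = Sum.inl c :=
  (h.inr_copy hG i).exists_insert h.notMem (fun _ _ => Sum.inr_ne_inl) fun a ha ham => by
    obtain ⟨rfl, -⟩ := h.eq_of_adj a ha m h.notMem ham
    exact he.symm

theorem insert_subset_essential (h : IsBranch F T S f q m) : insert m S ⊆ essential F T :=
  Set.insert_subset (mem_essential_of_adj (h.subset h.root_mem) h.adj_root) h.subset

theorem mem_insert_of_adj (h : IsBranch F T S f q m) {a b : V} (ha : a ∈ S) (hab : F.Adj a b) :
    b ∈ insert m S :=
  or_iff_not_imp_right.2 fun hb => (h.eq_of_adj a ha b hb hab).2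

theorem contains_of_clique [Finite V] (h : IsBranch F T S f q m)
    (hH : IsHost F T N π k d) (hG : unionCopies (cliqueWithPendants π) k T ≤ G)
    (he : G.Adj (Sum.inl (Sum.inl x)) (Sum.inr (i, f q))) (hd : d < (N ∩ insert m S).ncard) :
    Contains G F := by
  obtain ⟨p, hp, hpS, hpm⟩ := h.exists_insert_copy hG he
  have hseed : IsSeed F T N d G (insert m S) p := by
    refine ⟨hp, h.insert_subset_essential, ?_, ?_⟩
    · rintro a (rfl | ha) b hb hab
      · exact ⟨x, hpm⟩
      · exact absurd (h.mem_insert_of_adj ha hab) hb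
    · have hused : usedClique p (insert m S) = {x} := by
        rw [usedClique_insert hpS, hpm, usedClique_eq_empty fun a _ => ⟨_, rfl⟩]
        simp
      rw [hused, Set.ncard_singleton]
      omega
  exact hseed.contains hH hG

theorem contains_of_pendant_leaf [Finite V] (h : IsBranch F T S f q m)
    (hH : IsHost F T N π k d) (hG : unionCopies (cliqueWithPendants π) k T ≤ G)
    (he : G.Adj (Sum.inl (Sum.inr z)) (Sum.inr (i, f q))) (hm : (F.neighborSet m).Subsingleton)
    (hd : d ≤ (N ∩ insert m S).ncard) : Contains G F := by
  obtain ⟨p, hp, hpS, hpm⟩ := h.exists_insert_copy hG he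
  have hseed : IsSeed F T N d G (insert m S) p := by
    refine ⟨hp, h.insert_subset_essential, ?_, ?_⟩
    · rintro a (rfl | ha) b hb hab
      · exact absurd (Or.inr (hm h.adj_root.symm hab ▸ h.root_mem)) hb
      · exact absurd (h.mem_insert_of_adj ha hab) hb
    · have hused : usedClique p (insert m S) = ∅ := by
        rw [usedClique_insert hpS, hpm, usedClique_eq_empty fun a _ => ⟨_, rfl⟩]
        simp
      simpa [hused] using hd
  exact hseed.contains hH hG

theorem contains_of_pendant_path [Finite V] (h : IsBranch F T S f q m)
    (hH : IsHost F T N π k d) (hG : unionCopies (cliqueWithPendants π) k T ≤ G)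
    (he : G.Adj (Sum.inl (Sum.inr z)) (Sum.inr (i, f q))) (hmt : F.Adj m t)
    (hm : F.neighborSet m ⊆ {t, q}) (ht : t ∉ S)
    (hd : d < (N ∩ insert t (insert m S)).ncard) : Contains G F := by
  obtain ⟨p, hp, hpS, hpm⟩ := h.exists_insert_copy hG he
  have htm : t ∉ insert m S := fun h => h.elim hmt.ne' ht
  obtain ⟨p', hp', hp'p, hp't⟩ := hp.exists_insert (x := Sum.inl (Sum.inl (π z))) htm
    (by
      rintro a (rfl | ha)
      · simp [hpm]
      · simp [hpS ha])
    (by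
      rintro a (rfl | ha) hat
      · rw [hpm]
        exact hG (unionCopies_adj_inl.2 (cliqueWithPendants_adj_inr.2 rfl))
      · exact absurd (h.mem_insert_of_adj ha hat) htm)
  have hseed : IsSeed F T N d G (insert t (insert m S)) p' := by
    have hsub := h.insert_subset_essential
    refine ⟨hp', Set.insert_subset (mem_essential_of_adj (hsub (Set.mem_insert m S)) hmt) hsub,
      ?_, ?_⟩
    · rintro a (rfl | rfl | ha) b hb hab
      · exact ⟨π z, hp't⟩
      · rcases hm hab with rfl | rfl
        · exact absurd (Or.inl rfl) hb
        · exact absurd (Or.inr (Or.inr h.root_mem)) hb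
      · exact absurd (Or.inr (h.mem_insert_of_adj ha hab)) hb
    · have hused : usedClique p' (insert t (insert m S)) = {π z} := by
        rw [usedClique_insert hp'p, usedClique_insert hpS, hp't, hpm,
          usedClique_eq_empty fun a _ => ⟨_, rfl⟩]
        simp
      rw [hused, Set.ncard_singleton]
      omega
  exact hseed.contains hH hG

end IsBranch

end Seeding

namespace GoodTree

variable {n r k d : ℕ} {F : SimpleGraph (Fin n)} {T : SimpleGraph (Fin r)} {N : Set (Fin n)}
  {C Z : Type*} {π : Z → C}

theorem exists_satSingle_of_isHost [Finite C] [Finite Z] (hT : GoodTree F r T)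
    (hH : IsHost F T N π k d) (hd : 0 < d)
    (hN : ∀ a ∈ essential F T, d ≤ (N ∩ (F.connectedComponentMk a).supp).ncard)
    (hdeg : ∀ a ∈ N, IsEmpty Z ∨ (F.neighborSet a).Nontrivial)
    (hcross : ∀ x p,
      Contains (unionCopies (cliqueWithPendants π) k T ⊔ edge (Sum.inl x) (Sum.inr p)) F) :
    ∃ H : SimpleGraph (C ⊕ Z), SatSingle F (unionCopies H k T) := by
  have hcard := hH.card_add
  exact exists_satSingle_unionCopies
    (not_contains_unionCopies_cliqueWithPendants hH.subset hdeg (by omega)) hcross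
    fun _ _ => hT.contains_sup_edge_inr hH hN

theorem nontrivial_essential (hT : GoodTree F r T) : (essential F T).Nontrivial := by
  obtain ⟨ℓ⟩ := hT.1.connected.nonempty
  obtain ⟨A, B, f, g, s, y, h⟩ := hT.exists_isJoin ℓ ℓ
  exact ⟨s, h.left.subset h.left.root_mem, y, h.right.subset h.right.root_mem, h.left.adj_root.ne⟩

theorem exists_satSingle_of_clique (hT : GoodTree F r T) (hd : 0 < d)
    (hN : ∀ a ∈ essential F T, d ≤ (essential F T ∩ (F.connectedComponentMk a).supp).ncard)
    (hjoin : ∀ u, ∃ ℓ A B f g s y, IsJoin F T ℓ u A B f g s y ∧ d ≤ B.ncard) (hk : n ≤ k) :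
    ∃ H : SimpleGraph (Fin ((essential F T).ncard - d) ⊕ Empty),
      SatSingle F (unionCopies H k T) := by
  obtain ⟨a, ha⟩ := hT.nontrivial_essential.nonempty
  have hdN : d ≤ (essential F T).ncard :=
    (hN a ha).trans (Set.ncard_le_ncard Set.inter_subset_left)
  let π : Empty → Fin ((essential F T).ncard - d) := Empty.elim
  have hH : IsHost F T (essential F T) π k d :=
    { subset := subset_rfl
      leaf := by simp
      pendants := by simp
      card_le := by rwa [Nat.card_fin]
      card_add := by rw [Nat.card_fin]; omega }
  refine hT.exists_satSingle_of_isHost hH hd hN (fun _ _ => Or.inl inferInstance) ?_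
  rintro (x | x) ⟨i, u⟩
  · obtain ⟨ℓ, A, B, f, g, s, y, h, hB⟩ := hjoin u
    refine h.right.contains_of_clique hH le_sup_left (i := i) (x := x)
      (sup_edge_adj.2 (Or.inr ⟨Or.inl ⟨rfl, by rw [h.map_right]⟩, Sum.inl_ne_inr⟩)) ?_
    rw [Set.inter_eq_right.2 h.right.insert_subset_essential,
      Set.ncard_insert_of_notMem h.right.notMem]
    omega
  · exact x.elim

theorem exists_satSingle_of_card_add_one (hT : GoodTree F r T) (hk : n ≤ k) :
    ∃ H : SimpleGraph (Fin ((essential F T).ncard - 1) ⊕ Empty),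
      SatSingle F (unionCopies H k T) := by
  refine hT.exists_satSingle_of_clique one_pos (fun a ha => ?_) (fun u => ?_) hk
  · exact (Set.ncard_pos (Set.toFinite _)).2 ⟨a, ha, rfl⟩
  · obtain ⟨A, B, f, g, s, y, h⟩ := hT.exists_isJoin u u
    exact ⟨u, A, B, f, g, s, y, h, (Set.ncard_pos (Set.toFinite B)).2 ⟨y, h.right.root_mem⟩⟩

theorem exists_satSingle_of_card_add_two (hT : GoodTree F r T) (hadj : ∃ v w, T.Adj v w)
    (hk : n ≤ k) :
    ∃ H : SimpleGraph (Fin ((essential F T).ncard - 2) ⊕ Empty),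
      SatSingle F (unionCopies H k T) := by
  refine hT.exists_satSingle_of_clique two_pos (fun a ha => ?_) (fun u => ?_) hk
  · obtain ⟨b, hab⟩ : ∃ b, F.Adj a b := by
      by_cases hac : a ∈ core F T
      · exact hac.2.nonempty
      · obtain ⟨m, -, hm⟩ := exists_mem_core_of_notMem_core hadj ha hac
        exact ⟨m, (hm m).2 rfl⟩
    exact Set.one_lt_ncard_iff_nontrivial.2 ⟨a, ⟨ha, rfl⟩, b,
      ⟨mem_essential_of_adj ha hab, ConnectedComponent.eq.2 hab.symm.reachable⟩, hab.ne⟩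
  · obtain ⟨A, B, f, g, s, y, h⟩ := hT.exists_isJoin u u
    rcases mem_core_or_mem_core hadj (h.left.subset h.left.root_mem) h.left.adj_root with hs | hy
    · exact ⟨u, B, A, g, f, y, s, h.symm,
        Set.one_lt_ncard_iff_nontrivial.2 (h.left.nontrivial_of_mem_core hs)⟩
    · exact ⟨u, A, B, f, g, s, y, h,
        Set.one_lt_ncard_iff_nontrivial.2 (h.right.nontrivial_of_mem_core hy)⟩

theorem exists_satSingle_of_le_two (hT : GoodTree F r T) (hr : r ≤ 2) {c : ℕ} (hc : c < r) :
    ∃ (α : Type) (_ : Finite α) (H : SimpleGraph α) (k : ℕ), n + 2 ≤ k ∧ Nat.card α % r = c ∧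
      SatSingle F (unionCopies H k T) := by
  have h₁ := hT.exists_satSingle_of_card_add_one (k := n + 2) (by omega)
  by_cases hmod : ((essential F T).ncard - 1) % r = c
  · obtain ⟨H, hH⟩ := h₁
    exact ⟨_, inferInstance, H, n + 2, le_rfl, by simpa using hmod, hH⟩
  have hr2 : r = 2 := by
    by_contra hr2
    obtain rfl : r = 1 := by omega
    omega
  subst hr2
  have hadj : ∃ v w, T.Adj v w := ⟨0, hT.1.connected.preconnected.exists_adj_of_nontrivial 0⟩
  obtain ⟨H, hH⟩ := hT.exists_satSingle_of_card_add_two hadj (k := n + 2) (by omega)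
  have htwo := Set.one_lt_ncard_iff_nontrivial.2 hT.nontrivial_essential
  exact ⟨_, inferInstance, H, n + 2, le_rfl, by simp; omega, hH⟩

end GoodTree

section Leaves

variable {V W : Type*} {F : SimpleGraph V} {T : SimpleGraph W} {S R : Set V} {f : V → W}
  {a q m : V} {p : W}

theorem exists_neighborSet_subsingleton [Finite W] [Nontrivial W] (hT : T.IsTree) :
    ∃ ℓ, (T.neighborSet ℓ).Subsingleton := by
  classical
  have := Fintype.ofFinite W
  obtain ⟨ℓ, hℓ⟩ := hT.exists_vert_degree_one_of_nontrivial
  exact ⟨ℓ, fun _ hv _ hw => (degree_eq_one_iff_existsUnique_adj.1 hℓ).unique hv hw⟩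

theorem exists_neighborSet_nontrivial (hT : T.Connected) (hcard : 2 < Nat.card W) :
    ∃ p, (T.neighborSet p).Nontrivial := by
  have : Finite W := Nat.finite_of_card_ne_zero (by omega)
  have : Nontrivial W := Finite.one_lt_card_iff_nontrivial.1 (by omega)
  by_contra! hsub
  obtain ⟨v⟩ := hT.nonempty
  obtain ⟨w, hvw⟩ := hT.preconnected.exists_adj_of_nontrivial v
  have hclosed : ∀ a ∈ ({v, w} : Set W), ∀ b, T.Adj a b → b ∈ ({v, w} : Set W) := by
    rintro a (rfl | rfl) b hab
    · exact Or.inr (hsub _ hab hvw)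
    · exact Or.inl (hsub _ hab hvw.symm)
  have huniv : (Set.univ : Set W) ⊆ {v, w} := fun b _ =>
    mem_of_reachable hclosed (hT.preconnected v b) (Or.inl rfl)
  have hle := (Set.ncard_le_ncard huniv).trans (Set.ncard_insert_le v {w})
  rw [Set.ncard_univ, Set.ncard_singleton] at hle
  omega

theorem eq_of_adj_of_dist_add_one (hT : T.IsTree) {ℓ v b c : W} (hb : T.Adj b v) (hc : T.Adj c v)
    (hbd : T.dist ℓ b + 1 = T.dist ℓ v) (hcd : T.dist ℓ c + 1 = T.dist ℓ v) : b = c := by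
  have hpath : ∀ x, ∀ hx : T.Adj x v, T.dist ℓ x + 1 = T.dist ℓ v →
      ∃ P : T.Walk ℓ x, (P.concat hx).IsPath := fun x hx hxd => by
    obtain ⟨P, hP⟩ := hT.connected.exists_walk_length_eq_dist ℓ x
    exact ⟨P, Walk.isPath_of_length_eq_dist _ (by rw [Walk.length_concat, hP, hxd])⟩
  obtain ⟨P, hP⟩ := hpath b hb hbd
  obtain ⟨Q, hQ⟩ := hpath c hc hcd
  simpa only [Walk.penultimate_concat] using
    congrArg Walk.penultimate ((hT.existsUnique_path ℓ v).unique hP hQ)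

theorem IsPartialCopy.ncard_le_ncard_neighborSet [Finite W] (h : IsPartialCopy F T S f)
    (ha : a ∈ S) (hRS : R ⊆ S) (hR : R ⊆ F.neighborSet a) :
    R.ncard ≤ (T.neighborSet (f a)).ncard :=
  Set.ncard_le_ncard_of_injOn f (fun b hb => h.adj a ha b (hRS hb) (hR hb)) (h.injOn.mono hRS)

theorem ncard_neighborSet_sdiff_le (hN : F.neighborSet q ⊆ {a, m}) :
    (F.neighborSet q \ {m}).ncard ≤ 1 := by
  rw [← Set.ncard_singleton a]
  exact Set.ncard_le_ncard fun b hb => (hN hb.1).resolve_right hb.2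

theorem IsBranch.ncard_neighborSet_sdiff_le [Finite W] (h : IsBranch F T S f q m) :
    (F.neighborSet q \ {m}).ncard ≤ (T.neighborSet (f q)).ncard :=
  h.ncard_le_ncard_neighborSet h.root_mem
    (fun b hb => by_contra fun hbS => hb.2 (h.eq_of_adj q h.root_mem b hbS hb.1).2)
    Set.sdiff_subset

/-- A core vertex of the branch placed farthest from the leaf `f q` of `T` has a single core
neighbour, since in `T` it has only one neighbour closer to `f q`. -/
theorem IsBranch.exists_isCoreLeaf [Finite W] [Finite V] (h : IsBranch F T S f q m)
    (hT : T.IsTree) (hq : q ∈ core F T) (hℓ : (T.neighborSet (f q)).Subsingleton)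
    (hp : (T.neighborSet p).Nontrivial) :
    ∃ q' m' t, IsCoreLeaf F T q' m' ∧
      (F.neighborSet q' \ {m'}).ncard ≤ (T.neighborSet t).ncard := by
  obtain ⟨v, ⟨hvS, hv⟩, hmax⟩ := Set.exists_max_image (S ∩ core F T) (fun a => T.dist (f q) (f a))
    (Set.toFinite _) ⟨q, h.root_mem, hq⟩
  by_cases hvq : v = q
  · subst hvq
    obtain ⟨w, hw, hvw⟩ := h.mem_core_iff.1 hq
    have hwc : w ∉ core F T := fun hwc => by
      have hdist := hT.connected.dist_eq_zero_iff.1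
        (Nat.le_zero.1 ((hmax w ⟨hw, hwc⟩).trans_eq dist_self))
      exact hvw.ne (h.injOn hvS hw hdist)
    exact ⟨v, m, f v,
      isCoreLeaf_of_neighborSet_subset hq (h.neighborSet_subset hℓ hw hvw) hwc hp,
      h.ncard_neighborSet_sdiff_le⟩
  have hvN : F.neighborSet v ⊆ S := fun b hb =>
    by_contra fun hbS => hvq (h.eq_of_adj v hvS b hbS hb).1
  have hdeg := h.ncard_le_ncard_neighborSet hvS hvN subset_rfl
  obtain ⟨w, hw, hvw⟩ := exists_mem_core_adj hv.1 hdeg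
  have hcloser : ∀ b ∈ core F T, F.Adj v b →
      T.Adj (f b) (f v) ∧ T.dist (f q) (f b) + 1 = T.dist (f q) (f v) := fun b hb hvb => by
    have hadj := h.adj v hvS b (hvN hvb) hvb
    have hle := hmax b ⟨hvN hvb, hb⟩
    rcases hT.dist_eq_dist_add_one_of_adj (f q) hadj with hd | hd
    · exact ⟨hadj.symm, hd.symm⟩
    · exact absurd (hd ▸ hle) (Nat.not_succ_le_self _)
  refine ⟨v, w, f v, ⟨hv, hw, hvw, fun b hb hvb => ?_⟩,
    (Set.ncard_le_ncard Set.sdiff_subset).trans hdeg⟩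
  obtain ⟨hbv, hbd⟩ := hcloser b hb hvb
  obtain ⟨hwv, hwd⟩ := hcloser w hw hvw
  exact h.injOn (hvN hvb) (hvN hvw) (eq_of_adj_of_dist_add_one hT hbv hwv hbd hwd)

end Leaves

theorem IsCoreLeaf.exists_isBranch_nontrivial {V W : Type*} [Finite V] [Finite W]
    {F : SimpleGraph V} {T : SimpleGraph W} {q m : V} {u : W} (h : IsCoreLeaf F T q m)
    (hdeg : (F.neighborSet q \ {m}).ncard ≤ (T.neighborSet u).ncard) :
    ∃ S f q m, IsBranch F T S f q m ∧ f q = u ∧ (core F T ∩ insert m S).Nontrivial := by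
  obtain ⟨f, hf, hfq⟩ := h.exists_isBranch hdeg
  exact ⟨_, f, q, m, hf, hfq, q, ⟨h.left_mem, Or.inr hf.root_mem⟩, m, ⟨h.right_mem, Or.inl rfl⟩,
    h.adj.ne⟩

namespace GoodTree

variable {n r k : ℕ} {F : SimpleGraph (Fin n)} {T : SimpleGraph (Fin r)} {p u ℓ : Fin r}
  {A B : Set (Fin n)} {f g : Fin n → Fin r} {s y : Fin n}

theorem exists_isCoreLeaf (hT : GoodTree F r T) (hp : (T.neighborSet p).Nontrivial) :
    ∃ q m t, IsCoreLeaf F T q m ∧ (F.neighborSet q \ {m}).ncard ≤ (T.neighborSet t).ncard := by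
  obtain ⟨v, hv, w, -, hvw⟩ := id hp
  have : Nontrivial (Fin r) := ⟨v, w, hvw⟩
  obtain ⟨ℓ, hℓ⟩ := exists_neighborSet_subsingleton hT.1
  obtain ⟨A, B, f, g, s, y, h⟩ := hT.exists_isJoin ℓ ℓ
  rcases mem_core_or_mem_core ⟨p, v, hv⟩ (h.left.subset h.left.root_mem) h.left.adj_root
    with hs | hy
  · exact h.left.exists_isCoreLeaf hT.1 hs (h.map_left ▸ hℓ) hp
  · exact h.right.exists_isCoreLeaf hT.1 hy (h.map_right ▸ hℓ) hp

theorem exists_isBranch_nontrivial_of_mem_core (h : IsJoin F T ℓ u A B f g s y)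
    (hs : s ∈ core F T) (hℓ : (T.neighborSet ℓ).Subsingleton) (hp : (T.neighborSet p).Nontrivial)
    (hu : (T.neighborSet u).Nonempty) :
    ∃ S f q m, IsBranch F T S f q m ∧ f q = u ∧ (core F T ∩ insert m S).Nontrivial := by
  by_cases hB : ∃ b ∈ B, b ∈ core F T
  · obtain ⟨b, hbB, hb⟩ := hB
    exact ⟨B, g, y, s, h.right, h.map_right, s, ⟨hs, Or.inl rfl⟩, b, ⟨hb, Or.inr hbB⟩,
      fun hsb => h.right.notMem (hsb ▸ hbB)⟩
  have hy : y ∉ core F T := fun hy => hB ⟨y, h.right.root_mem, hy⟩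
  obtain ⟨t, ht, hst⟩ := h.left.mem_core_iff.1 hs
  have hN : F.neighborSet s ⊆ {y, t} :=
    Set.pair_comm t y ▸ h.left.neighborSet_subset (h.map_left ▸ hℓ) ht hst
  exact (isCoreLeaf_of_neighborSet_subset hs hN hy hp).exists_isBranch_nontrivial
    ((ncard_neighborSet_sdiff_le hN).trans ((Set.ncard_pos (Set.toFinite _)).2 hu))

/-- If `B` contains no core vertex besides `y`, then `y` has no neighbour in the core, so a star
at `y` fits nowhere in `T`; the star without `s` fits at `u`, which thus has maximum degree. -/
theorem exists_isBranch_nontrivial_of_notMem_core (hT : GoodTree F r T)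
    (h : IsJoin F T ℓ u A B f g s y) (hs : s ∉ core F T) (hy : y ∈ core F T)
    (hp : (T.neighborSet p).Nontrivial) :
    ∃ S f q m, IsBranch F T S f q m ∧ f q = u ∧ (core F T ∩ insert m S).Nontrivial := by
  by_cases hB : ∃ b ∈ B, b ∈ core F T ∧ b ≠ y
  · obtain ⟨b, hbB, hb, hby⟩ := hB
    exact ⟨B, g, y, s, h.right, h.map_right, b, ⟨hb, Or.inr hbB⟩, y,
      ⟨hy, Or.inr h.right.root_mem⟩, hby⟩
  have hno : ¬ ∃ b ∈ core F T, F.Adj y b := fun ⟨b, hb, hyb⟩ => by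
    by_cases hbB : b ∈ B
    · exact hB ⟨b, hbB, hb, hyb.ne'⟩
    · exact hs ((h.right.eq_of_adj y h.right.root_mem b hbB hyb).2 ▸ hb)
  have hlt : ∀ t, (T.neighborSet t).ncard < (F.neighborSet y).ncard := fun t =>
    not_le.1 fun hle => hno (exists_mem_core_adj hy.1 hle)
  have hle := h.map_right ▸ h.right.ncard_neighborSet_sdiff_le
  have hcard := Set.ncard_sdiff_singleton_add_one (s := F.neighborSet y) h.right.adj_root
  obtain ⟨q, m, t, hqm, hq⟩ := hT.exists_isCoreLeaf hp
  have hmax : (T.neighborSet t).ncard ≤ (T.neighborSet u).ncard := by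
    have := hlt t
    omega
  exact hqm.exists_isBranch_nontrivial (hq.trans hmax)

theorem exists_isBranch_nontrivial (hT : GoodTree F r T) (hp : (T.neighborSet p).Nontrivial)
    (u : Fin r) :
    ∃ S f q m, IsBranch F T S f q m ∧ f q = u ∧ (core F T ∩ insert m S).Nontrivial := by
  obtain ⟨v, hv, w, -, hvw⟩ := id hp
  have : Nontrivial (Fin r) := ⟨v, w, hvw⟩
  obtain ⟨ℓ, hℓ⟩ := exists_neighborSet_subsingleton hT.1
  obtain ⟨A, B, f, g, s, y, h⟩ := hT.exists_isJoin ℓ u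
  by_cases hs : s ∈ core F T
  · exact exists_isBranch_nontrivial_of_mem_core h hs hℓ hp
      (hT.1.connected.preconnected.exists_adj_of_nontrivial u)
  · exact hT.exists_isBranch_nontrivial_of_notMem_core h hs
      ((mem_core_or_mem_core ⟨p, v, hv⟩ (h.left.subset h.left.root_mem)
        h.left.adj_root).resolve_left hs) hp

theorem contains_of_pendant {C Z : Type*} {π : Z → C}
    {G : SimpleGraph ((C ⊕ Z) ⊕ Fin k × Fin r)} {z : Z} {i : Fin k} (hT : GoodTree F r T)
    (hp : (T.neighborSet p).Nontrivial) (hH : IsHost F T (core F T) π k 1)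
    (hG : unionCopies (cliqueWithPendants π) k T ≤ G)
    (he : G.Adj (Sum.inl (Sum.inr z)) (Sum.inr (i, u))) : Contains G F := by
  obtain ⟨v, hv, w, -, hvw⟩ := id hp
  have : Nontrivial (Fin r) := ⟨v, w, hvw⟩
  obtain ⟨ℓ, hℓ⟩ := exists_neighborSet_subsingleton hT.1
  obtain ⟨A, B, f, g, s, y, h⟩ := hT.exists_isJoin ℓ u
  rw [← h.map_right] at he
  have hs := h.left.subset h.left.root_mem
  by_cases hsc : s ∈ core F T
  · obtain ⟨t, ht, hst⟩ := h.left.mem_core_iff.1 hsc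
    have hN := h.left.neighborSet_subset (h.map_left ▸ hℓ) ht hst
    refine h.right.contains_of_pendant_path hH hG he hst hN
      (Set.disjoint_left.1 h.disjoint ht) (Set.one_lt_ncard_iff_nontrivial.2 ?_)
    obtain ⟨b, hb, hsb⟩ := exists_mem_core_adj_of_neighborSet_subset hs hN hp
    refine ⟨s, ⟨hsc, Or.inr (Or.inl rfl)⟩, b, ⟨hb, ?_⟩, hsb.ne⟩
    rcases hN hsb with rfl | rfl
    · exact Or.inl rfl
    · exact Or.inr (Or.inr h.right.root_mem)
  · have hy := (mem_core_or_mem_core ⟨p, v, hv⟩ hs h.left.adj_root).resolve_left hsc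
    exact h.right.contains_of_pendant_leaf hH hG he
      (neighborSet_subsingleton_of_notMem_core hs hsc)
      ((Set.ncard_pos (Set.toFinite _)).2 ⟨y, hy, Or.inr h.right.root_mem⟩)

theorem exists_satSingle_of_isHost_core {C Z : Type*} [Finite C] [Finite Z] {π : Z → C}
    (hT : GoodTree F r T) (hp : (T.neighborSet p).Nontrivial)
    (hH : IsHost F T (core F T) π k 1) :
    ∃ H : SimpleGraph (C ⊕ Z), SatSingle F (unionCopies H k T) := by
  obtain ⟨v, hv, -⟩ := id hp
  refine hT.exists_satSingle_of_isHost hH one_pos (fun a ha => ?_)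
    (fun a ha => Or.inr ha.2) ?_
  · rw [Nat.one_le_iff_ne_zero, ← Nat.pos_iff_ne_zero, Set.ncard_pos (Set.toFinite _)]
    by_cases hac : a ∈ core F T
    · exact ⟨a, hac, rfl⟩
    · obtain ⟨m, hm, ham⟩ := exists_mem_core_of_notMem_core ⟨p, v, hv⟩ ha hac
      exact ⟨m, hm, ConnectedComponent.eq.2 ((ham m).2 rfl).symm.reachable⟩
  · rintro (x | z) ⟨i, u⟩
    · obtain ⟨S, f, q, m, h, rfl, hcore⟩ := hT.exists_isBranch_nontrivial hp u
      exact h.contains_of_clique hH le_sup_left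
        (sup_edge_adj.2 (Or.inr ⟨Or.inl ⟨rfl, rfl⟩, Sum.inl_ne_inr⟩))
        (Set.one_lt_ncard_iff_nontrivial.2 hcore)
    · exact hT.contains_of_pendant hp hH le_sup_left
        (sup_edge_adj.2 (Or.inr ⟨Or.inl ⟨rfl, rfl⟩, Sum.inl_ne_inr⟩))

theorem exists_satSingle_of_three_le (hT : GoodTree F r T) (hr : 3 ≤ r) {c : ℕ} (hc : c < r) :
    ∃ (α : Type) (_ : Finite α) (H : SimpleGraph α) (k : ℕ), n + 2 ≤ k ∧ Nat.card α % r = c ∧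
      SatSingle F (unionCopies H k T) := by
  obtain ⟨p, hp⟩ := exists_neighborSet_nontrivial hT.1.connected (by rwa [Nat.card_fin])
  obtain ⟨v, hv, -⟩ := id hp
  have htwo : 1 < (core F T).ncard := by
    obtain ⟨S, f, q, m, -, -, hcore⟩ := hT.exists_isBranch_nontrivial hp p
    exact Set.one_lt_ncard_iff_nontrivial.2 (hcore.mono Set.inter_subset_left)
  obtain ⟨K, hK⟩ : ∃ K, (core F T).ncard = K + 2 := ⟨_, (Nat.sub_add_cancel htwo).symm⟩
  let M := (K + 1) + (K + 1) * n
  let π : (Fin (K + 1) × Fin n) ⊕ Fin (c + (r - 1) * M) → Fin (K + 1) :=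
    Sum.elim Prod.fst fun _ => 0
  have hπ : ∀ x, n ≤ (π ⁻¹' {x}).ncard := fun x => by
    simpa only [Set.ncard_univ, Nat.card_fin] using
      Set.ncard_le_ncard_of_injOn (s := Set.univ) (t := π ⁻¹' {x})
        (fun j : Fin n => Sum.inl (x, j)) (fun _ _ => rfl) fun _ _ _ _ h => by simpa using h
  have hH : IsHost F T (core F T) π (n + 2) 1 :=
    { subset := Set.sep_subset _ _
      leaf := fun a ha => exists_mem_core_of_notMem_core ⟨p, v, hv⟩ ha.1 ha.2
      pendants := fun _ x => by simpa only [Nat.card_fin] using hπ x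
      card_le := by simp
      card_add := by rw [Nat.card_fin, hK] }
  obtain ⟨H, hsat⟩ := hT.exists_satSingle_of_isHost_core hp hH
  refine ⟨_, inferInstance, H, n + 2, le_rfl, ?_, hsat⟩
  have hcard : Nat.card (Fin (K + 1) ⊕ (Fin (K + 1) × Fin n) ⊕ Fin (c + (r - 1) * M)) =
      c + r * M := by
    obtain ⟨r, rfl⟩ : ∃ r', r = r' + 1 := ⟨r - 1, by omega⟩
    simp only [Nat.card_sum, Nat.card_prod, Nat.card_fin, Nat.add_sub_cancel, M]
    ring
  rw [hcard, Nat.add_mul_mod_self_left, Nat.mod_eq_of_lt hc]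

theorem exists_satSingle (hT : GoodTree F r T) {c : ℕ} (hc : c < r) :
    ∃ (α : Type) (_ : Finite α) (H : SimpleGraph α) (k : ℕ), n + 2 ≤ k ∧ Nat.card α % r = c ∧
      SatSingle F (unionCopies H k T) :=
  (le_or_gt r 2).elim (fun hr => hT.exists_satSingle_of_le_two hr hc)
    fun hr => hT.exists_satSingle_of_three_le hr hc

end GoodTree

theorem caseIWith_sInf {nF : ℕ} {F : SimpleGraph (Fin nF)} (hF : F ≠ ⊥)
    (h : ∃ (t : ℕ) (T : SimpleGraph (Fin t)), GoodTree F t T) :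
    CaseIWith F (sInf {t : ℕ | ∃ T : SimpleGraph (Fin t), GoodTree F t T}) := by
  obtain ⟨T, hT⟩ := Nat.sInf_mem (s := {t : ℕ | ∃ T : SimpleGraph (Fin t), GoodTree F t T}) h
  exact caseIWith_of_minimal_goodTree hF
    (fun s hs T' hT' => Nat.notMem_of_lt_sInf hs ⟨T', hT'⟩) hT.1 fun _ hc => hT.exists_satSingle hc

/-- The Truszczynski–Tuza dichotomy for single forbidden graphs, with the characterisation of
case (i) in terms of trees. -/
theorem stmt11 {nF : ℕ} (F : SimpleGraph (Fin nF)) (hF : 1 ≤ Nat.card F.edgeSet) :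
    ((∃ r : ℕ, CaseIWith F r) ∨ CaseII F) ∧
    ((∃ r : ℕ, CaseIWith F r) ↔ ∃ (t : ℕ) (T : SimpleGraph (Fin t)), GoodTree F t T) ∧
    ((∃ (t : ℕ) (T : SimpleGraph (Fin t)), GoodTree F t T) →
      CaseIWith F (sInf {t : ℕ | ∃ T : SimpleGraph (Fin t), GoodTree F t T})) := by
  have hF' : F ≠ ⊥ := by
    rintro rfl
    simp at hF
  refine ⟨?_, ⟨fun ⟨_, hr⟩ => exists_goodTree_of_caseIWith hF' hr,
    fun h => ⟨_, caseIWith_sInf hF' h⟩⟩, caseIWith_sInf hF'⟩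
  by_cases h : ∃ (t : ℕ) (T : SimpleGraph (Fin t)), GoodTree F t T
  · exact Or.inl ⟨_, caseIWith_sInf hF' h⟩
  · push Not at h
    exact Or.inr (caseII_of_forall_not_goodTree hF' h)
end

section
/- For every tree T whose number of vertices lies in {1,2,3,4,5,7}, there exists a subtree T' of T such that |V(T')| and |V(T)| are coprime and, for all vertices v ∈ T' and w ∈ T, there is an integer k ≥ 0 such that the tree (T' ∪ kT) + v𝐰 contains a subgraph isomorphic to T whose vertex set contains v. -/
open SimpleGraph Filter Topology

/-- `(T' ∪ kT) + v𝐰`: the tree obtained from the disjoint union of the subtree of `T` induced on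
`s` with `k` copies of `T`, by joining `v ∈ s` to the copy of `w` in each of the `k` copies. -/
def treeConstr {t : ℕ} (T : SimpleGraph (Fin t)) (s : Set (Fin t)) (v : ↥s) (w : Fin t)
    (k : ℕ) : SimpleGraph (↥s ⊕ Fin k × Fin t) :=
  SimpleGraph.fromRel (fun x y =>
    match x, y with
    | Sum.inl a, Sum.inl b => T.Adj a.1 b.1
    | Sum.inr (i, a), Sum.inr (j, b) => i = j ∧ T.Adj a b
    | Sum.inl a, Sum.inr (_, b) => a = v ∧ b = w
    | _, _ => False)

/-!
Call a vertex of degree at least three a hub.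

If `T` has at most one hub, take `T' = {v}` and let `c` be the hub, or a centre of `T` if there is
none. The branches of `T` at `c` are paths, so `T` embeds by sending `c` to `v` and each branch into
a copy of `T` of its own, along a path that starts at `w`. Such a path is long enough because
`ecc(c) ≤ rad(T) + 1 ≤ ecc(w) + 1`.

If `T` has two adjacent hubs, it consists of two adjacent vertices with two leaves each, and one
further vertex. Deleting that vertex gives `T'`, and the part of `T` lost by the deletion, or by
moving a hub to `v`, is found in the copies of `T`.

If `T` has two hubs that are not adjacent, they have a common neighbour and `T` consists of two
cherries attached to it. Again `T' = {v}`: according to whether `w` has degree one or not, `v` can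
play a hub or the common neighbour.
-/

section

variable {V W : Type*} {T : SimpleGraph V} {G : SimpleGraph W} {ι : Type*}
  {v w x y : V} {s : Set V}

/-! ### Distances and neighbours in trees -/

theorem not_adj_of_adj_of_adj (hT : T.IsTree) {x y z : V} (hxy : T.Adj x y) (hxz : T.Adj x z) :
    ¬T.Adj y z := fun hyz =>
  hT.dist_ne_of_adj x hyz ((dist_eq_one_iff_adj.2 hxy).trans (dist_eq_one_iff_adj.2 hxz).symm)

theorem eq_of_adj_of_adj_of_ne (hT : T.IsAcyclic) {x y a b : V} (hxy : x ≠ y)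
    (hxa : T.Adj x a) (hay : T.Adj a y) (hxb : T.Adj x b) (hby : T.Adj b y) : a = b := by
  have hpath {c : V} (hxc : T.Adj x c) (hcy : T.Adj c y) :
      (Walk.cons hxc (Walk.cons hcy Walk.nil)).IsPath := by
    simp [hxc.ne, hcy.ne, hxy]
  have := hT.subsingleton_path x y |>.elim ⟨_, hpath hxa hay⟩ ⟨_, hpath hxb hby⟩
  simpa using congrArg (fun p : T.Path x y => p.1.snd) this

theorem eq_of_adj_of_dist_eq (hT : T.IsTree) {c x y z : V} (hxz : T.Adj x z) (hyz : T.Adj y z)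
    (hx : T.dist c z = T.dist c x + 1) (hy : T.dist c z = T.dist c y + 1) : x = y := by
  have hpath {u : V} (huz : T.Adj u z) (hu : T.dist c z = T.dist c u + 1) :
      ∃ p : T.Walk c z, p.IsPath ∧ p.penultimate = u := by
    obtain ⟨p, hp⟩ := hT.connected.exists_walk_length_eq_dist c u
    exact ⟨p.concat huz, (p.concat huz).isPath_of_length_eq_dist (by simp [hp, hu]), by simp⟩
  obtain ⟨p, hp, rfl⟩ := hpath hxz hx
  obtain ⟨q, hq, rfl⟩ := hpath hyz hy
  rw [(hT.existsUnique_path c z).unique hp hq]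

theorem exists_adj_dist_eq_add_one (hT : T.Connected) {c x : V} (hcx : c ≠ x) :
    ∃ y, T.Adj y x ∧ T.dist c x = T.dist c y + 1 := by
  obtain ⟨p, hp⟩ := hT.exists_walk_length_eq_dist c x
  have hnil : ¬p.Nil := Walk.not_nil_of_ne hcx
  refine ⟨p.penultimate, p.adj_penultimate hnil, ?_⟩
  rw [← hp, ← length_eq_dist_of_subwalk hp (p.isSubwalk_take (p.length - 1))]
  have := Walk.not_nil_iff_lt_length.1 hnil
  rw [Walk.take_length]
  omega

theorem exists_mem_exists_notMem_adj (hT : T.Connected) (hs : s.Nonempty) (hs' : s ≠ Set.univ) :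
    ∃ a ∈ s, ∃ x ∉ s, T.Adj a x := by
  obtain ⟨a, ha⟩ := hs
  obtain ⟨x, hx⟩ := (Set.ne_univ_iff_exists_notMem s).1 hs'
  obtain ⟨p⟩ := hT a x
  obtain ⟨d, -, hfst, hsnd⟩ := p.exists_boundary_dart s ha hx
  exact ⟨d.fst, hfst, d.snd, hsnd, d.adj⟩

theorem induce_range_connected (hG : G.Connected) (f : G →g T) :
    (T.induce (Set.range f)).Connected :=
  hG.map ⟨Set.rangeFactorization f, f.map_adj⟩ Set.rangeFactorization_surjective

theorem nonempty_iso_of_copy [Finite W] [Finite V] (hT : T.IsTree) (hG : G.Connected)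
    (f : Copy G T) (hcard : Nat.card W = Nat.card V) : Nonempty (G ≃g T) := by
  have hf : Function.Bijective f :=
    (Nat.bijective_iff_injective_and_card f).2 ⟨f.injective, hcard⟩
  have hle : G.map f.toEmbedding ≤ T := by
    rintro _ _ ⟨-, a, b, hab, rfl, rfl⟩
    exact f.toHom.map_adj hab
  have hconn : (G.map f.toEmbedding).Connected :=
    hG.map (Embedding.map f.toEmbedding G).toHom hf.2
  have hge := (isTree_iff_minimal_connected.1 hT).2 hconn hle
  refine ⟨⟨Equiv.ofBijective f hf, fun {a b} => ⟨fun h => ?_, f.toHom.map_adj⟩⟩⟩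
  exact (map_adj_apply (f := f.toEmbedding)).1 (hge h)

theorem exists_adj_adj_ne [Fintype V] [DecidableRel T.Adj] {x : V} (hx : 3 ≤ T.degree x) (y : V) :
    ∃ a b, a ≠ b ∧ (T.Adj x a ∧ a ≠ y) ∧ T.Adj x b ∧ b ≠ y := by
  classical
  have hcard : 1 < ((T.neighborFinset x).erase y).card :=
    lt_of_lt_of_le (by rw [card_neighborFinset_eq_degree]; omega) Finset.pred_card_le_card_erase
  obtain ⟨a, ha, b, hb, hab⟩ := Finset.one_lt_card.1 hcard
  simp only [Finset.mem_erase, mem_neighborFinset] at ha hb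
  exact ⟨a, b, hab, ha.symm, hb.symm⟩

theorem exists_common_neighbor [Fintype V] [DecidableRel T.Adj] {x y : V} (hxy : x ≠ y)
    (hnadj : ¬T.Adj x y) (hcard : Fintype.card V < T.degree x + T.degree y + 2) :
    ∃ m, T.Adj m x ∧ T.Adj m y := by
  classical
  by_contra! h
  have hdisj : Disjoint (T.neighborFinset x) (T.neighborFinset y) :=
    Finset.disjoint_left.2 fun m hmx hmy =>
      h m ((mem_neighborFinset ..).1 hmx).symm ((mem_neighborFinset ..).1 hmy).symm
  have hle := Finset.card_le_univ (insert x (insert y (T.neighborFinset x ∪ T.neighborFinset y)))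
  rw [Finset.card_insert_of_notMem, Finset.card_insert_of_notMem,
    Finset.card_union_of_disjoint hdisj, card_neighborFinset_eq_degree,
    card_neighborFinset_eq_degree] at hle
  · omega
  · simpa using hnadj
  · simpa [adj_comm, hxy] using hnadj

theorem degree_add_dist_le_card [Fintype V] [DecidableRel T.Adj] (hT : T.Connected) {c x : V}
    (hcx : c ≠ x) : T.degree c + T.dist c x ≤ Fintype.card V := by
  classical
  obtain ⟨p, hp, hlen⟩ := hT.exists_path_of_dist c x
  have hdist {i : ℕ} (hi : i ≤ p.length) : T.dist c (p.getVert i) = i := by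
    simpa [hi] using (length_eq_dist_of_subwalk hlen (p.isSubwalk_take i)).symm
  let far := ((Finset.range (p.length + 1)).erase 1).image p.getVert
  have hfar : far.card = T.dist c x := by
    have hpos : 0 < p.length := Walk.not_nil_iff_lt_length.1 (Walk.not_nil_of_ne hcx)
    rw [Finset.card_image_of_injOn, Finset.card_erase_of_mem (by simpa using hpos),
      Finset.card_range, Nat.add_sub_cancel, hlen]
    exact hp.getVert_injOn.mono fun i hi =>
      Finset.mem_range_succ_iff.1 (Finset.mem_of_mem_erase hi)
  have hdisj : Disjoint (T.neighborFinset c) far := by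
    refine Finset.disjoint_right.2 fun y hy hcy => ?_
    obtain ⟨i, hi, rfl⟩ := Finset.mem_image.1 hy
    obtain ⟨hi1, hi⟩ := Finset.mem_erase.1 hi
    rw [mem_neighborFinset, ← dist_eq_one_iff_adj, hdist (Finset.mem_range_succ_iff.1 hi)] at hcy
    exact hi1 hcy
  calc T.degree c + T.dist c x = (T.neighborFinset c ∪ far).card := by
        rw [Finset.card_union_of_disjoint hdisj, hfar, card_neighborFinset_eq_degree]
    _ ≤ Fintype.card V := Finset.card_le_univ _

theorem eccent_add_one_le_ediam [Finite V] (hT : T.IsTree) {c y z : V} (hyz : y ≠ z)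
    (hy : T.Adj c y) (hz : T.Adj c z) : T.eccent c + 1 ≤ T.ediam := by
  obtain ⟨x, hx⟩ := T.exists_edist_eq_eccent_of_finite c
  obtain ⟨u, hu⟩ : ∃ u, T.dist x u = T.dist x c + 1 := by
    by_contra! h
    refine hyz (eq_of_adj_of_dist_eq (c := x) hT hy.symm hz.symm ?_ ?_)
    · exact (hT.dist_eq_dist_add_one_of_adj x hy).resolve_right (h y)
    · exact (hT.dist_eq_dist_add_one_of_adj x hz).resolve_right (h z)
  calc T.eccent c + 1 = T.edist x u := by
        rw [← hx, ← (hT.connected c x).coe_dist_eq_edist, ← (hT.connected x u).coe_dist_eq_edist,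
          hu, T.dist_comm]
        rfl
    _ ≤ T.ediam := edist_le_ediam

theorem eccent_le_radius_add_one [Fintype V] [DecidableRel T.Adj] (hT : T.IsTree) {c : V}
    (hc : 2 ≤ T.degree c) (hcard : Fintype.card V ≤ T.degree c + 4) :
    T.eccent c ≤ T.radius + 1 := by
  obtain ⟨y, hy, z, hz, hyz⟩ := Finset.one_lt_card.1 hc
  obtain ⟨x, hx⟩ := T.exists_edist_eq_eccent_of_finite c
  have hdiam : T.eccent c + 1 ≤ 2 * T.radius :=
    (eccent_add_one_le_ediam hT hyz (by simpa using hy) (by simpa using hz)).trans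
      ediam_le_two_mul_radius
  have hle : T.dist c x ≤ 4 := by
    rcases eq_or_ne c x with rfl | hcx
    · simp
    · have := degree_add_dist_le_card hT.connected hcx
      omega
  rw [← hx, ← (hT.connected c x).coe_dist_eq_edist] at hdiam ⊢
  generalize T.radius = r at *
  induction r using ENat.recTopCoe with
  | top => simp
  | coe r => norm_cast at *; omega

theorem exists_forall_dist_le_of_eccent_le [Finite V] (hT : T.Connected) {c : V}
    (hc : T.eccent c ≤ T.radius + 1) (w : V) :
    ∃ u, ∀ x, T.dist c x ≤ T.dist w u + 1 := by
  obtain ⟨u, hu⟩ := T.exists_edist_eq_eccent_of_finite w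
  refine ⟨u, fun x => ?_⟩
  have hle : T.edist c x ≤ T.edist w u + 1 :=
    calc T.edist c x ≤ T.eccent c := edist_le_eccent
      _ ≤ T.radius + 1 := hc
      _ ≤ T.edist w u + 1 := by rw [hu]; gcongr; exact radius_le_eccent
  rw [← (hT c x).coe_dist_eq_edist, ← (hT w u).coe_dist_eq_edist] at hle
  exact_mod_cast hle

/-! ### Branches at a vertex -/

/-- The function `b` sends each vertex other than `c` to its branch at `c`: the neighbour of `c` in
its component of `T - c`. The value at `c` is irrelevant. -/
structure IsBranchMap (T : SimpleGraph V) (c : V) (b : V → V) : Prop where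
  eq_self : ∀ u, T.Adj c u → b u = u
  eq_of_adj : ∀ x y, x ≠ c → y ≠ c → T.Adj x y → b x = b y

theorem exists_isBranchMap (hT : T.IsTree) (c : V) : ∃ b, IsBranchMap T c b := by
  choose p hp using fun x => (hT.existsUnique_path c x).exists
  have hb {x y : V} (hx : x ≠ c) (hxy : T.Adj x y) (hmem : x ∈ (p y).support) :
      (p x).snd = (p y).snd := by
    have hlen : 0 < (p x).length := Walk.not_nil_iff_lt_length.1 (Walk.not_nil_of_ne hx.symm)
    rw [hT.isAcyclic.path_concat (hp x) (hp y) hxy hmem, Walk.concat_eq_append, Walk.snd, Walk.snd,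
      Walk.getVert_append']
    split_ifs <;> grind
  refine ⟨fun x => (p x).snd, fun u hu => ?_, fun x y hx hy hxy => ?_⟩
  · exact (hT.isAcyclic.eq_snd_of_adj_start (hp u) hu (p u).end_mem_support).symm
  · by_cases hmem : x ∈ (p y).support
    · exact hb hx hxy hmem
    · exact (hb hy hxy.symm
        (hT.isAcyclic.mem_support_of_ne_mem_support_of_adj_of_isPath (hp x) (hp y) hxy hmem)).symm

theorem IsBranchMap.eq_of_dist_eq [Fintype V] [DecidableRel T.Adj] {c : V} {b : V → V}
    (hb : IsBranchMap T c b) (hT : T.Connected) (hdeg : ∀ x, x ≠ c → T.degree x ≤ 2) {x y : V}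
    (hx : x ≠ c) (hxy : b x = b y) (hdist : T.dist c x = T.dist c y) : x = y := by
  have hne {z : V} (hz : 0 < T.dist c z) : c ≠ z := by rintro rfl; simp at hz
  obtain ⟨n, hn⟩ := Nat.exists_eq_add_of_lt (hT.pos_dist_of_ne hx.symm)
  rw [zero_add] at hn
  induction n generalizing x y with
  | zero =>
    have hcx : T.Adj c x := dist_eq_one_iff_adj.1 hn
    have hcy : T.Adj c y := dist_eq_one_iff_adj.1 (hdist ▸ hn)
    rw [← hb.eq_self x hcx, hxy, hb.eq_self y hcy]
  | succ n ih =>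
    have hy : y ≠ c := (hne (by omega)).symm
    obtain ⟨z, hzx, hz⟩ := exists_adj_dist_eq_add_one hT hx.symm
    obtain ⟨z', hzy, hz'⟩ := exists_adj_dist_eq_add_one hT hy.symm
    have hzc : z ≠ c := (hne (by omega)).symm
    have hzc' : z' ≠ c := (hne (by omega)).symm
    have hbz : b z = b z' :=
      (hb.eq_of_adj z x hzc hx hzx).trans (hxy.trans (hb.eq_of_adj z' y hzc' hy hzy).symm)
    obtain rfl : z = z' := ih hzc hbz (by omega) (by omega)
    obtain ⟨m, hmz, hm⟩ := exists_adj_dist_eq_add_one hT hzc.symm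
    have hmx : m ≠ x := by rintro rfl; omega
    have hmy : m ≠ y := by rintro rfl; omega
    by_contra hxy
    exact (hdeg z hzc).not_gt (Finset.two_lt_card.2 ⟨m, by simpa using hmz.symm, x,
      by simpa using hzx, y, by simpa using hzy, hmx, hmy, hxy⟩)

/-! ### Double stars and double cherries -/

/-- The graph on `Fin n` in which each `i` with `par i ≠ i` is joined to its parent `par i`. -/
def parentGraph {n : ℕ} (par : Fin n → Fin n) : SimpleGraph (Fin n) :=
  fromRel fun i j => par i = j

instance {n : ℕ} (par : Fin n → Fin n) : DecidableRel (parentGraph par).Adj :=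
  inferInstanceAs (DecidableRel (fromRel _).Adj)

theorem parentGraph_connected {n : ℕ} [NeZero n] {par : Fin n → Fin n}
    (hpar : ∀ i, i ≠ 0 → par i < i) : (parentGraph par).Connected := by
  refine (connected_iff_exists_forall_reachable _).2 ⟨0, fun i => ?_⟩
  induction i using WellFoundedLT.induction with
  | _ i ih =>
    rcases eq_or_ne i 0 with rfl | hi
    · rfl
    · have hadj : (parentGraph par).Adj (par i) i :=
        (fromRel_adj _ _ _).2 ⟨(hpar i hi).ne, .inr rfl⟩
      exact (ih _ (hpar i hi)).trans hadj.reachable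

/-- A copy of a labelled tree, given by the images of the labels. -/
def parentGraphCopy {n : ℕ} {par : Fin n → Fin n} (f : Fin n → V) (hf : (List.ofFn f).Nodup)
    (hadj : ∀ i, par i ≠ i → T.Adj (f i) (f (par i))) : Copy (parentGraph par) T where
  toHom :=
    { toFun := f
      map_rel' := by
        rintro i j ⟨hij, rfl | rfl⟩
        · exact hadj i hij.symm
        · exact (hadj j hij).symm }
  injective' := List.nodup_ofFn.1 hf

/-- The graph `G` with a new vertex `none` joined to its vertex `i`. -/
def addPendant (G : SimpleGraph W) (i : W) : SimpleGraph (Option W) :=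
  G.map .some ⊔ edge none (some i)

theorem addPendant_connected (hG : G.Connected) (i : W) : (addPendant G i).Connected := by
  refine (connected_iff_exists_forall_reachable _).2 ⟨some i, fun x => ?_⟩
  cases x with
  | none =>
    have hadj : (addPendant G i).Adj (some i) none := by simp [addPendant, edge_adj]
    exact hadj.reachable
  | some a =>
    exact ((hG i a).map (Embedding.map .some G).toHom).mono le_sup_left

/-- A copy of `G` together with a further vertex `x` joined to the image of `i`. -/
def addPendantCopy (f : Copy G T) {i : W} {x : V} (hx : ∀ a, f a ≠ x) (hadj : T.Adj (f i) x) :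
    Copy (addPendant G i) T where
  toHom :=
    { toFun := fun o => o.elim x f
      map_rel' := by
        rintro a b (⟨-, a, b, hab, rfl, rfl⟩ | hab)
        · exact f.toHom.map_adj hab
        · obtain ⟨⟨rfl, rfl⟩ | ⟨rfl, rfl⟩, -⟩ := (edge_adj _ _ _ _).1 hab
          exacts [hadj.symm, hadj] }
  injective' := by
    rintro (_ | a) (_ | b) hab
    · rfl
    · exact (hx b hab.symm).elim
    · exact (hx a hab).elim
    · exact congrArg some (f.injective hab)

/-- Two adjacent hubs `0` and `3`, with leaves `1, 2` and `4, 5`. -/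
abbrev doubleStar : SimpleGraph (Fin 6) := parentGraph ![0, 0, 0, 0, 3, 3]

/-- Two hubs `1` and `4`, with leaves `2, 3` and `5, 6`, joined through the vertex `0`. -/
abbrev doubleCherry : SimpleGraph (Fin 7) := parentGraph ![0, 0, 1, 1, 0, 4, 4]

theorem exists_doubleStar_copy_apply_eq (i : Fin 6) :
    ∃ τ : Copy doubleStar doubleStar, τ 0 = i ∨ τ 1 = i := by
  fin_cases i
  exacts [⟨.id _, .inl rfl⟩, ⟨.id _, .inr rfl⟩,
    ⟨parentGraphCopy ![0, 2, 1, 3, 4, 5] (by decide) (by decide), .inr rfl⟩,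
    ⟨parentGraphCopy ![3, 4, 5, 0, 1, 2] (by decide) (by decide), .inl rfl⟩,
    ⟨parentGraphCopy ![3, 4, 5, 0, 1, 2] (by decide) (by decide), .inr rfl⟩,
    ⟨parentGraphCopy ![3, 5, 4, 0, 1, 2] (by decide) (by decide), .inr rfl⟩]

theorem nonempty_copy_doubleStar [Fintype V] [DecidableRel T.Adj] (hT : T.IsTree) {x y : V}
    (hxy : T.Adj x y) (hx : 3 ≤ T.degree x) (hy : 3 ≤ T.degree y) :
    Nonempty (Copy doubleStar T) := by
  obtain ⟨a, a', haa', ⟨ha, hay⟩, ha', hay'⟩ := exists_adj_adj_ne hx y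
  obtain ⟨b, b', hbb', ⟨hb, hbx⟩, hb', hbx'⟩ := exists_adj_adj_ne hy x
  have hne {u v : V} (hu : T.Adj x u) (hv : T.Adj y v) : u ≠ v := by
    rintro rfl
    exact not_adj_of_adj_of_adj hT hxy hu hv
  refine ⟨parentGraphCopy ![x, a, a', y, b, b'] ?_ ?_⟩
  · simp [ha.ne, ha'.ne, hxy.ne, hb.ne, hb'.ne, haa', hay, hay', hbb', hbx.symm, hbx'.symm,
      hne ha hb, hne ha hb', hne ha' hb, hne ha' hb']
  · simpa [Fin.forall_fin_succ] using ⟨ha.symm, ha'.symm, hxy.symm, hb.symm, hb'.symm⟩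

theorem nonempty_copy_doubleCherry [Fintype V] [DecidableRel T.Adj] (hT : T.IsTree) {m x y : V}
    (hxy : x ≠ y) (hmx : T.Adj m x) (hmy : T.Adj m y) (hx : 3 ≤ T.degree x)
    (hy : 3 ≤ T.degree y) : Nonempty (Copy doubleCherry T) := by
  obtain ⟨a, a', haa', ⟨ha, ham⟩, ha', ham'⟩ := exists_adj_adj_ne hx m
  obtain ⟨b, b', hbb', ⟨hb, hbm⟩, hb', hbm'⟩ := exists_adj_adj_ne hy m
  have hnadj : ¬T.Adj x y := not_adj_of_adj_of_adj hT hmx hmy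
  have hnex {u : V} (hu : T.Adj x u) : u ≠ y := fun h => hnadj (h ▸ hu)
  have hney {u : V} (hu : T.Adj y u) : x ≠ u := fun h => hnadj (h ▸ hu.symm)
  have hne {u v : V} (hum : u ≠ m) (hu : T.Adj x u) (hv : T.Adj y v) : u ≠ v := by
    rintro rfl
    exact hum (eq_of_adj_of_adj_of_ne hT.isAcyclic hxy hu hv.symm hmx.symm hmy)
  refine ⟨parentGraphCopy ![m, x, a, a', y, b, b'] ?_ ?_⟩
  · simp [hmx.ne, hmy.ne, ham.symm, ham'.symm, hbm.symm, hbm'.symm, ha.ne, ha'.ne, hxy, hb.ne,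
      hb'.ne, haa', hbb', hnex ha, hnex ha', hney hb, hney hb', hne ham ha hb, hne ham ha hb',
      hne ham' ha' hb, hne ham' ha' hb']
  · simpa [Fin.forall_fin_succ] using ⟨hmx.symm, ha.symm, ha'.symm, hmy.symm, hb.symm, hb'.symm⟩

theorem nonempty_iso_addPendant_doubleStar [Finite V] (hT : T.IsTree) (σ : Copy doubleStar T)
    (hcard : Nat.card V = 7) :
    Nonempty (addPendant doubleStar 0 ≃g T) ∨ Nonempty (addPendant doubleStar 1 ≃g T) := by
  have hrange : Set.range σ ≠ Set.univ := fun h => by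
    have hle := Nat.card_le_card_of_surjective σ (Set.range_eq_univ.1 h)
    simp [hcard] at hle
  obtain ⟨_, ⟨a, rfl⟩, x, hx, hax⟩ :=
    exists_mem_exists_notMem_adj hT.connected (Set.range_nonempty σ) hrange
  have hiso (τ : Copy doubleStar doubleStar) {i : Fin 6} (hi : τ i = a) :
      Nonempty (addPendant doubleStar i ≃g T) := by
    refine nonempty_iso_of_copy hT (addPendant_connected (parentGraph_connected (by decide)) i)
      (addPendantCopy (σ.comp τ) (x := x) (fun b hb => hx ⟨τ b, hb⟩) ?_) (by simp [hcard])
    rwa [Copy.comp_apply, hi]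
  obtain ⟨τ, h | h⟩ := exists_doubleStar_copy_apply_eq a
  exacts [.inl (hiso τ h), .inr (hiso τ h)]

/-! ### Copies of trees in `(T' ∪ kT) + v𝐰` -/

/-- The tree `(T' ∪ kT) + v𝐰` with `T'` enlarged to `T`: the vertices `(none, x)` form the copy of
`T` containing `T'`, and `ι` indexes the `k` further copies. -/
def attachCopies (ι : Type*) (T : SimpleGraph V) (v w : V) : SimpleGraph (Option ι × V) :=
  fromRel fun p q => p.1 = q.1 ∧ T.Adj p.2 q.2 ∨ p = (none, v) ∧ q.1 ≠ none ∧ q.2 = w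

theorem attachCopies_adj_of_adj (o : Option ι) (h : T.Adj x y) :
    (attachCopies ι T v w).Adj (o, x) (o, y) :=
  (fromRel_adj _ _ _).2 ⟨by simpa using h.ne, .inl (.inl ⟨rfl, h⟩)⟩

theorem attachCopies_adj_some (i : ι) : (attachCopies ι T v w).Adj (none, v) (some i, w) :=
  (fromRel_adj _ _ _).2 ⟨by simp, .inl (.inr ⟨rfl, by simp, rfl⟩)⟩

/-- The copy of `T` indexed by `o` in `attachCopies ι T v w`. -/
def copyAt (o : Option ι) : Copy T (attachCopies ι T v w) where
  toHom := ⟨fun x => (o, x), attachCopies_adj_of_adj o⟩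
  injective' := Prod.mk_right_injective o

/-- `G` embeds into the tree `(T' ∪ kT) + v𝐰` with a copy that contains `v`, where `T'` is induced
by `s` and the `k` copies of `T` are indexed by `ι`. -/
def HasCopyThrough (ι : Type*) (G : SimpleGraph W) (T : SimpleGraph V) (s : Set V) (v w : V) :
    Prop :=
  ∃ f : Copy G (attachCopies ι T v w), (∀ a x, f a = (none, x) → x ∈ s) ∧ ∃ a, f a = (none, v)

theorem HasCopyThrough.mono {s' : Set V} (h : HasCopyThrough ι G T s v w) (hs : s ⊆ s') :
    HasCopyThrough ι G T s' v w :=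
  let ⟨f, hfs, hv⟩ := h
  ⟨f, fun a x hx => hs (hfs a x hx), hv⟩

theorem HasCopyThrough.of_iso {U : Type*} {H : SimpleGraph U} (h : HasCopyThrough ι G T s v w)
    (e : G ≃g H) : HasCopyThrough ι H T s v w :=
  let ⟨f, hfs, a, ha⟩ := h
  ⟨f.comp e.symm.toCopy, fun b x hx => hfs (e.symm b) x hx, e a, by simp [ha]⟩

theorem HasCopyThrough.exists_embedding_treeConstr {t k : ℕ} {T : SimpleGraph (Fin t)}
    {s : Set (Fin t)} {v : s} {w : Fin t} (h : HasCopyThrough (Fin k) T T s v w) :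
    ∃ f : Fin t ↪ (↥s ⊕ Fin k × Fin t),
      (∀ a b : Fin t, T.Adj a b → (treeConstr T s v w k).Adj (f a) (f b)) ∧
      ∃ a : Fin t, f a = Sum.inl v := by
  obtain ⟨φ, hφs, a, ha⟩ := h
  let toPair : ↥s ⊕ Fin k × Fin t → Option (Fin k) × Fin t :=
    Sum.elim (fun x => (none, x)) (Prod.map some id)
  have hinj : toPair.Injective :=
    Function.Injective.sumElim (fun x y hxy => by simpa [Subtype.ext_iff] using hxy)
      ((Option.some_injective _).prodMap Function.injective_id) (by simp)
  have hadj (p q) : (attachCopies (Fin k) T v w).Adj (toPair p) (toPair q) →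
      (treeConstr T s v w k).Adj p q := by
    rcases p with p | ⟨i, p⟩ <;> rcases q with q | ⟨j, q⟩ <;>
      simp only [attachCopies, treeConstr, toPair, fromRel_adj, Sum.elim_inl, Sum.elim_inr,
        Prod.map, Prod.ext_iff, Subtype.ext_iff, id] <;>
      grind
  have hrange (x) : ∃ p, toPair p = φ x := by
    rcases hx : φ x with ⟨_ | i, y⟩
    exacts [⟨.inl ⟨y, hφs x y hx⟩, rfl⟩, ⟨.inr (i, y), rfl⟩]
  choose f hf using hrange
  refine ⟨⟨f, fun x y hxy => φ.injective ?_⟩, fun x y hxy => hadj (f x) (f y) ?_, a, hinj ?_⟩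
  · exact (hf x).symm.trans ((congrArg toPair hxy).trans (hf y))
  · rw [hf, hf]
    exact φ.toHom.map_adj hxy
  · exact (hf a).trans ha

theorem hasCopyThrough_of_degree_le_two [Fintype V] [DecidableRel T.Adj] (hT : T.IsTree)
    {c u : V} (hdeg : ∀ x, x ≠ c → T.degree x ≤ 2) (hu : ∀ x, T.dist c x ≤ T.dist w u + 1) :
    HasCopyThrough (Fin (Fintype.card V)) T T {v} v w := by
  classical
  obtain ⟨b, hb⟩ := exists_isBranchMap hT c
  obtain ⟨p, hp, hlen⟩ := hT.connected.exists_path_of_dist w u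
  let H := attachCopies (Fin (Fintype.card V)) T v w
  let arm (x : V) : Option (Fin (Fintype.card V)) × V :=
    (some (Fintype.equivFin V (b x)), p.getVert (T.dist c x - 1))
  let f (x : V) := if x = c then (none, v) else arm x
  have hpos {x : V} (hx : x ≠ c) : 0 < T.dist c x := hT.connected.pos_dist_of_ne hx.symm
  have hstart {x : V} (h : T.Adj c x) : H.Adj (none, v) (arm x) := by
    simpa [arm, dist_eq_one_iff_adj.2 h] using attachCopies_adj_some (Fintype.equivFin V (b x))
  have hstep {x y : V} (hx : x ≠ c) (hy : y ≠ c) (hxy : T.Adj x y)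
      (hdist : T.dist c y = T.dist c x + 1) : H.Adj (arm x) (arm y) := by
    have hlt : T.dist c x - 1 < p.length := by have := hu y; have := hpos hx; omega
    have hadj := p.adj_getVert_succ hlt
    rw [show T.dist c x - 1 + 1 = T.dist c y - 1 by have := hpos hx; omega] at hadj
    simpa only [arm, hb.eq_of_adj x y hx hy hxy] using attachCopies_adj_of_adj _ hadj
  have hadj {x y : V} (hxy : T.Adj x y) : H.Adj (f x) (f y) := by
    by_cases hx : x = c <;> by_cases hy : y = c <;> simp only [f, hx, hy, if_true, if_false]
    · exact (hxy.ne (hx.trans hy.symm)).elim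
    · exact hstart (hx ▸ hxy)
    · exact (hstart (hy ▸ hxy.symm)).symm
    · rcases hT.dist_eq_dist_add_one_of_adj c hxy with h | h
      exacts [(hstep hy hx hxy.symm h).symm, hstep hx hy hxy h]
  have hinj : Function.Injective f := by
    intro x y hxy
    by_cases hx : x = c <;> by_cases hy : y = c <;>
      simp only [f, hx, hy, if_true, if_false, arm, Prod.mk.injEq, Option.some_inj,
        EmbeddingLike.apply_eq_iff_eq, reduceCtorEq, false_and] at hxy
    · exact hx.trans hy.symm
    · have hmem {z : V} : T.dist c z - 1 ≤ p.length := by have := hu z; omega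
      have := hp.getVert_injOn hmem hmem hxy.2
      have := hpos hx
      have := hpos hy
      exact hb.eq_of_dist_eq hT.connected hdeg hx hxy.1 (by omega)
  refine ⟨⟨⟨f, hadj⟩, hinj⟩, fun x y hxy => ?_, c, if_pos rfl⟩
  by_cases hx : x = c
  · simpa [f, hx, eq_comm] using hxy
  · simp [f, hx, arm] at hxy

theorem hasCopyThrough_addPendant (σ : Copy G T) (i : W) :
    HasCopyThrough (Fin 1) (addPendant G i) T (Set.range σ) (σ i) w := by
  let base : Copy G (attachCopies (Fin 1) T (σ i) w) := (copyAt none).comp σ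
  have hnew (a) : base a ≠ (some 0, w) := fun h => by cases h
  refine ⟨addPendantCopy base hnew (attachCopies_adj_some 0), ?_, some i, rfl⟩
  rintro (_ | a) x hx <;> cases hx
  exact ⟨a, rfl⟩

theorem hasCopyThrough_addPendant_doubleStar_hub (σ : Copy doubleStar T) :
    HasCopyThrough (Fin 3) (addPendant doubleStar 0) T (Set.range σ) (σ 1) w := by
  let H := attachCopies (Fin 3) T (σ 1) w
  have hσ {i j : Fin 6} : σ i = σ j ↔ i = j := σ.injective.eq_iff
  have hadj (i j : Fin 6) (hij : doubleStar.Adj i j) : H.Adj (none, σ i) (none, σ j) :=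
    attachCopies_adj_of_adj none (σ.toHom.map_adj hij)
  have hjoin (l : Fin 3) : H.Adj (none, σ 1) (some l, w) := attachCopies_adj_some l
  let base : Copy doubleStar H := parentGraphCopy
    ![(none, σ 1), (some 0, w), (some 1, w), (none, σ 0), (none, σ 2), (none, σ 3)]
    (by simp [hσ]) (by
      simpa [Fin.forall_fin_succ] using ⟨(hjoin 0).symm, (hjoin 1).symm, hadj 0 1 (by decide),
        hadj 2 0 (by decide), hadj 3 0 (by decide)⟩)
  have hnew (a : Fin 6) : base a ≠ (some 2, w) := fun h => by fin_cases a <;> cases h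
  refine ⟨addPendantCopy base hnew (hjoin 2), ?_, some 0, rfl⟩
  rintro (_ | a) x hx
  · cases hx
  · fin_cases a <;> cases hx <;> exact ⟨_, rfl⟩

theorem hasCopyThrough_addPendant_doubleStar_leaf (σ : Copy doubleStar T) {u : V}
    (hwu : T.Adj w u) :
    HasCopyThrough (Fin 1) (addPendant doubleStar 1) T (Set.range σ) (σ 0) w := by
  let H := attachCopies (Fin 1) T (σ 0) w
  have hσ {i j : Fin 6} : σ i = σ j ↔ i = j := σ.injective.eq_iff
  have hadj (i j : Fin 6) (hij : doubleStar.Adj i j) : H.Adj (none, σ i) (none, σ j) :=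
    attachCopies_adj_of_adj none (σ.toHom.map_adj hij)
  let base : Copy doubleStar H := parentGraphCopy
    ![(none, σ 0), (some 0, w), (none, σ 2), (none, σ 3), (none, σ 4), (none, σ 5)]
    (by simp [hσ]) (by
      simpa [Fin.forall_fin_succ] using ⟨(attachCopies_adj_some 0).symm, hadj 2 0 (by decide),
        hadj 3 0 (by decide), hadj 4 3 (by decide), hadj 5 3 (by decide)⟩)
  have hnew (a : Fin 6) : base a ≠ (some 0, u) := fun h => by
    fin_cases a <;> cases h; exact hwu.ne rfl
  refine ⟨addPendantCopy base hnew (attachCopies_adj_of_adj _ hwu), ?_, some 0, rfl⟩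
  rintro (_ | a) x hx
  · cases hx
  · fin_cases a <;> cases hx <;> exact ⟨_, rfl⟩

theorem hasCopyThrough_doubleCherry_of_center {q r : V} (hqr : q ≠ r) (hq : T.Adj w q)
    (hr : T.Adj w r) : HasCopyThrough (Fin 2) doubleCherry T {v} v w := by
  let H := attachCopies (Fin 2) T v w
  have hadj {x y : V} (l : Fin 2) (h : T.Adj x y) : H.Adj (some l, x) (some l, y) :=
    attachCopies_adj_of_adj (some l) h
  have hjoin (l : Fin 2) : H.Adj (some l, w) (none, v) := (attachCopies_adj_some l).symm
  refine ⟨parentGraphCopy ![(none, v), (some 0, w), (some 0, q), (some 0, r), (some 1, w),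
    (some 1, q), (some 1, r)] ?_ ?_, fun a x hx => ?_, 0, rfl⟩
  · simp [hqr, hq.ne, hr.ne]
  · simpa [Fin.forall_fin_succ] using ⟨hjoin 0, hadj 0 hq.symm, hadj 0 hr.symm, hjoin 1,
      hadj 1 hq.symm, hadj 1 hr.symm⟩
  · fin_cases a <;> cases hx; rfl

theorem hasCopyThrough_doubleCherry_of_leaf {p q r : V} (hqr : q ≠ r) (hwq : w ≠ q)
    (hwr : w ≠ r) (hp : T.Adj w p) (hq : T.Adj p q) (hr : T.Adj p r) :
    HasCopyThrough (Fin 3) doubleCherry T {v} v w := by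
  let H := attachCopies (Fin 3) T v w
  have hadj {x y : V} (h : T.Adj x y) : H.Adj (some 2, x) (some 2, y) :=
    attachCopies_adj_of_adj (some 2) h
  have hjoin (l : Fin 3) : H.Adj (none, v) (some l, w) := attachCopies_adj_some l
  refine ⟨parentGraphCopy ![(some 2, w), (none, v), (some 0, w), (some 1, w), (some 2, p),
    (some 2, q), (some 2, r)] ?_ ?_, fun a x hx => ?_, 1, rfl⟩
  · simp [hqr, hwq, hwr, hp.ne, hq.ne, hr.ne]
  · simpa [Fin.forall_fin_succ] using ⟨hjoin 2, (hjoin 0).symm, (hjoin 1).symm, hadj hp.symm,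
      hadj hq.symm, hadj hr.symm⟩
  · fin_cases a <;> cases hx; rfl

theorem hasCopyThrough_doubleCherry (e : doubleCherry ≃g T) :
    ∃ k : ℕ, HasCopyThrough (Fin k) T T {v} v w := by
  have hne {i j : Fin 7} (h : i ≠ j) : e i ≠ e j := e.injective.ne h
  have hadj {i j : Fin 7} (h : doubleCherry.Adj i j) : T.Adj (e i) (e j) := e.map_adj_iff.2 h
  have hclaw : ∀ i : Fin 7,
      (∃ q r, q ≠ r ∧ doubleCherry.Adj i q ∧ doubleCherry.Adj i r) ∨
      ∃ p q r, q ≠ r ∧ i ≠ q ∧ i ≠ r ∧ doubleCherry.Adj i p ∧ doubleCherry.Adj p q ∧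
        doubleCherry.Adj p r := by decide
  obtain ⟨i, rfl⟩ := e.surjective w
  rcases hclaw i with ⟨q, r, hqr, hq, hr⟩ | ⟨p, q, r, hqr, hiq, hir, hp, hq, hr⟩
  · exact ⟨2, (hasCopyThrough_doubleCherry_of_center (hne hqr) (hadj hq) (hadj hr)).of_iso e⟩
  · exact ⟨3, (hasCopyThrough_doubleCherry_of_leaf (hne hqr) (hne hiq) (hne hir) (hadj hp)
      (hadj hq) (hadj hr)).of_iso e⟩

/-! ### Absorbing subtrees -/

/-- `T` has a subtree `T'`, induced by `s`, of order coprime to that of `T` such that for all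
`v ∈ T'` and `w ∈ T` some tree `(T' ∪ kT) + v𝐰` contains a copy of `T` through `v`. -/
def HasAbsorbingSubtree (T : SimpleGraph V) : Prop :=
  ∃ s : Set V, (T.induce s).Connected ∧ (Nat.card s).Coprime (Nat.card V) ∧
    ∀ v ∈ s, ∀ w, ∃ k : ℕ, HasCopyThrough (Fin k) T T s v w

theorem hasAbsorbingSubtree_of_singleton (v : V)
    (h : ∀ w, ∃ k : ℕ, HasCopyThrough (Fin k) T T {v} v w) : HasAbsorbingSubtree T :=
  ⟨{v}, Connected.of_subsingleton, by simp, by simpa using h⟩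

theorem hasAbsorbingSubtree_of_subsingleton_three_le_degree [Fintype V] [DecidableRel T.Adj]
    (hT : T.IsTree) (hcard : Fintype.card V ≤ 7)
    (hdeg : {x | 3 ≤ T.degree x}.Subsingleton) : HasAbsorbingSubtree T := by
  obtain ⟨c, hc, hcx⟩ :
      ∃ c, T.eccent c ≤ T.radius + 1 ∧ ∀ x, x ≠ c → T.degree x ≤ 2 := by
    by_cases! h : ∃ c, 3 ≤ T.degree c
    · obtain ⟨c, hc⟩ := h
      exact ⟨c, eccent_le_radius_add_one hT (by omega) (by omega), fun x hx =>
        Nat.le_of_lt_succ (not_le.1 fun h => hx (hdeg h hc))⟩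
    · have := hT.connected.nonempty
      obtain ⟨c, hc⟩ := T.exists_eccent_eq_radius
      exact ⟨c, hc.trans_le le_self_add, fun x _ => Nat.le_of_lt_succ (h x)⟩
  refine hasAbsorbingSubtree_of_singleton c fun w => ?_
  obtain ⟨u, hu⟩ := exists_forall_dist_le_of_eccent_le hT.connected hc w
  exact ⟨_, hasCopyThrough_of_degree_le_two hT hcx hu⟩

theorem hasAbsorbingSubtree_of_copy_doubleStar [Finite V] (hT : T.IsTree) (σ : Copy doubleStar T)
    (hcard : Nat.card V = 7) : HasAbsorbingSubtree T := by
  have hconn : doubleStar.Connected := parentGraph_connected (by decide)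
  refine ⟨Set.range σ, induce_range_connected hconn σ.toHom, ?_, ?_⟩
  · rw [Nat.card_range_of_injective (f := σ) σ.injective, hcard, Nat.card_fin]
    decide
  rintro _ ⟨i, rfl⟩ w
  obtain ⟨τ, h⟩ := exists_doubleStar_copy_apply_eq i
  have hmono : Set.range (σ.comp τ) ⊆ Set.range σ := by
    rintro _ ⟨j, rfl⟩
    exact ⟨τ j, rfl⟩
  have hv {k : ℕ} {j : Fin 6} (hj : τ j = i) {H : SimpleGraph (Option (Fin 6))} (e : H ≃g T)
      (hH : HasCopyThrough (Fin k) H T (Set.range (σ.comp τ)) (σ.comp τ j) w) :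
      ∃ k : ℕ, HasCopyThrough (Fin k) T T (Set.range σ) (σ i) w := by
    rw [Copy.comp_apply, hj] at hH
    exact ⟨k, (hH.mono hmono).of_iso e⟩
  have : Nontrivial V := Finite.one_lt_card_iff_nontrivial.1 (by omega)
  obtain ⟨u, hwu⟩ := hT.connected.preconnected.exists_adj_of_nontrivial w
  rcases nonempty_iso_addPendant_doubleStar hT σ hcard with ⟨⟨e⟩⟩ | ⟨⟨e⟩⟩ <;> rcases h with h | h
  · exact hv h e (hasCopyThrough_addPendant _ 0)
  · exact hv h e (hasCopyThrough_addPendant_doubleStar_hub _)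
  · exact hv h e (hasCopyThrough_addPendant_doubleStar_leaf _ hwu)
  · exact hv h e (hasCopyThrough_addPendant _ 1)

theorem hasAbsorbingSubtree_of_card_le_seven [Fintype V] (hT : T.IsTree)
    (hle : Fintype.card V ≤ 7) (hne : Fintype.card V ≠ 6) : HasAbsorbingSubtree T := by
  classical
  by_cases hdeg : {x | 3 ≤ T.degree x}.Subsingleton
  · exact hasAbsorbingSubtree_of_subsingleton_three_le_degree hT hle hdeg
  obtain ⟨x, hx, y, hy, hxy⟩ := Set.not_subsingleton_iff.1 hdeg
  simp only [Set.mem_ofPred_eq] at hx hy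
  have hcard {n : ℕ} {H : SimpleGraph (Fin n)} (σ : Copy H T) : n ≤ Fintype.card V := by
    simpa using Fintype.card_le_of_injective σ σ.injective
  by_cases hadj : T.Adj x y
  · obtain ⟨σ⟩ := nonempty_copy_doubleStar hT hadj hx hy
    have := hcard σ
    exact hasAbsorbingSubtree_of_copy_doubleStar hT σ (by rw [Nat.card_eq_fintype_card]; omega)
  · obtain ⟨m, hmx, hmy⟩ := exists_common_neighbor hxy hadj (by omega)
    obtain ⟨σ⟩ := nonempty_copy_doubleCherry hT hxy hmx hmy hx hy
    obtain ⟨e⟩ := nonempty_iso_of_copy hT (parentGraph_connected (by decide)) σ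
      (by simpa using (hcard σ).antisymm hle)
    exact hasAbsorbingSubtree_of_singleton x fun w => hasCopyThrough_doubleCherry e

end

/-- For every tree `T` on `1, 2, 3, 4, 5` or `7` vertices there is a subtree `T'` (the subgraph
induced on a connected set `s` of vertices) whose order is coprime to that of `T` and such that
for all `v ∈ T'` and `w ∈ T`, for some `k ≥ 0` the tree `(T' ∪ kT) + v𝐰` contains a copy of `T`
containing `v`. -/
theorem stmt12 (t : ℕ) (ht : t ∈ ({1, 2, 3, 4, 5, 7} : Set ℕ)) (T : SimpleGraph (Fin t))
    (hT : T.IsTree) :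
    ∃ s : Set (Fin t), (SimpleGraph.induce s T).Connected ∧ Nat.Coprime (Nat.card ↥s) t ∧
      ∀ (v : ↥s) (w : Fin t), ∃ k : ℕ, ∃ f : Fin t ↪ (↥s ⊕ Fin k × Fin t),
        (∀ a b : Fin t, T.Adj a b → (treeConstr T s v w k).Adj (f a) (f b)) ∧
        ∃ a : Fin t, f a = Sum.inl v := by
  have hcard : Fintype.card (Fin t) = t := Fintype.card_fin t
  have hsmall : t ≤ 7 ∧ t ≠ 6 := by
    simp only [Set.mem_insert_iff, Set.mem_singleton_iff] at ht
    omega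
  obtain ⟨s, hs, hcop, hcopy⟩ :=
    hasAbsorbingSubtree_of_card_le_seven hT (hcard.trans_le hsmall.1) (hcard.trans_ne hsmall.2)
  refine ⟨s, hs, by simpa using hcop, fun v w => ?_⟩
  obtain ⟨k, hk⟩ := hcopy v v.2 w
  exact ⟨k, hk.exists_embedding_treeConstr⟩
end
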